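/- For every integer k and every integer N ≥ 0 one has: (i) (1−χ)ρ^k and (1−χ)|ρ|^k belong to 𝒮_0^k, uniformly for z ∈ Z₁ ∪ Z₂ ∪ Z₃; (ii) for z ∈ Z₁(1/2−ε) with 0 < ε ≪ 1, h^{k₋/4}χρ^k and h^{k₋/4}χ|ρ|^k belong to 𝒮^{−N}_{1/2−ε}, where k₋ = 0 if k ≥ 0 and k₋ = |k| if k < 0; (iii) for z ∈ Z₂ ∪ Z₃, χρ^k and χ|ρ|^k belong to 𝒮_0^{−N}. -/

import Mathlib

/- Setting: the cotangent bundle T*Γ of the boundary Γ (dimension n = d−1) is modelled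
in local coordinates by `ℝ^n × ℝ^n`.  The data are: `R₀`, the (positive definite,
symmetric) matrix of the principal symbol `r₀(x',ξ') = ⟨R₀(x')ξ',ξ'⟩` of `−Δ_Γ`, and
`n₀ = n|_Γ > 0`.  `ρ = √(−r₀ + z n₀)` is the square root with `Im ρ > 0`, and
`η = φ₀(r₀/δ₀)` is the cutoff localizing near `ξ' = 0`. -/

open scoped ENNReal

noncomputable section

variable (n : ℕ)

/-- Mixed derivative `∂_{x'}^α ∂_{ξ'}^β a` evaluated on directions `v`, `w`. -/
def Dmix (a : (EuclideanSpace ℝ (Fin n)) × (EuclideanSpace ℝ (Fin n)) → ℂ) (α β : ℕ)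
    (v : Fin α → EuclideanSpace ℝ (Fin n)) (w : Fin β → EuclideanSpace ℝ (Fin n))
    (p : (EuclideanSpace ℝ (Fin n)) × (EuclideanSpace ℝ (Fin n))) : ℂ :=
  iteratedFDeriv ℝ (α + β) a p
    (Fin.append (fun i => ((v i), (0 : EuclideanSpace ℝ (Fin n))))
      (fun i => ((0 : EuclideanSpace ℝ (Fin n)), w i)))

/-- The Japanese bracket `⟨ξ'⟩`. -/
def jap {n : ℕ} (ξ : EuclideanSpace ℝ (Fin n)) : ℝ := Real.sqrt (1 + ‖ξ‖ ^ 2)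

/-- `z ∈ Z₁ ∪ Z₂ ∪ Z₃`. -/
def Zall (z : ℂ) : Prop :=
  (z.re = 1 ∧ 0 < |z.im| ∧ |z.im| ≤ 1) ∨ (z.re = -1 ∧ |z.im| ≤ 1) ∨
    (|z.re| ≤ 1 ∧ |z.im| = 1)

/-- The square root of `w` with nonnegative imaginary part (for `w ∉ [0,∞)` this is the
square root with strictly positive imaginary part). -/
def ssqrt (w : ℂ) : ℂ :=
  if 0 ≤ (w ^ (1 / 2 : ℂ)).im then w ^ (1 / 2 : ℂ) else -(w ^ (1 / 2 : ℂ))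

/-- The principal symbol `r₀(x',ξ') = ⟨R₀(x')ξ',ξ'⟩` of `−Δ_Γ`. -/
def rZero (R₀ : EuclideanSpace ℝ (Fin n) → (EuclideanSpace ℝ (Fin n) →L[ℝ] EuclideanSpace ℝ (Fin n)))
    (p : (EuclideanSpace ℝ (Fin n)) × (EuclideanSpace ℝ (Fin n))) : ℝ :=
  (inner ℝ (R₀ p.1 p.2) p.2 : ℝ)

/-- `ρ(x',ξ',z) = √(−r₀(x',ξ') + z n₀(x'))`, branch with `Im ρ > 0`. -/
def rho (R₀ : EuclideanSpace ℝ (Fin n) → (EuclideanSpace ℝ (Fin n) →L[ℝ] EuclideanSpace ℝ (Fin n)))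
    (n₀ : EuclideanSpace ℝ (Fin n) → ℝ) (z : ℂ)
    (p : (EuclideanSpace ℝ (Fin n)) × (EuclideanSpace ℝ (Fin n))) : ℂ :=
  ssqrt (-(rZero n R₀ p : ℂ) + z * (n₀ p.1 : ℂ))


/-- `z ∈ Z₁` : `Re z = 1`, `0 < |Im z| ≤ 1`. -/
def Zone (z : ℂ) : Prop := z.re = 1 ∧ 0 < |z.im| ∧ |z.im| ≤ 1

/-- `z ∈ Z₁(ε)` : `z ∈ Z₁` and `h^ε ≤ |Im z| ≤ 1`. -/
def ZoneEps (h ε : ℝ) (z : ℂ) : Prop := Zone z ∧ h ^ ε ≤ |z.im|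

/-- `z ∈ Z₂ ∪ Z₃`. -/
def Ztwothree (z : ℂ) : Prop := (z.re = -1 ∧ |z.im| ≤ 1) ∨ (|z.re| ≤ 1 ∧ |z.im| = 1)

/-- `k₋ = 0` if `k ≥ 0`, `k₋ = |k|` if `k < 0`. -/
def kminus (k : ℤ) : ℤ := if k < 0 then -k else 0

/-- Uniform bounds (over an index type) on derivatives up to order `m` at given points. -/
def UB {ι E F : Type*} [NormedAddCommGroup E] [NormedSpace ℝ E] [NormedAddCommGroup F]
    [NormedSpace ℝ F] (f : ι → E → F) (p : ι → E) (A L : ι → ℝ) (m : ℕ) : Prop :=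
  ∃ C : ℝ, 0 ≤ C ∧ ∀ i, ∀ j ≤ m, ‖iteratedFDeriv ℝ j (f i) (p i)‖ ≤ C * A i * L i ^ j

section UBsec

variable {ι E F G H : Type*} [NormedAddCommGroup E] [NormedSpace ℝ E] [NormedAddCommGroup F]
    [NormedSpace ℝ F] [NormedAddCommGroup G] [NormedSpace ℝ G] [NormedAddCommGroup H]
    [NormedSpace ℝ H] {p : ι → E} {A A' B L L' : ι → ℝ} {m : ℕ}

theorem UB.mono {f : ι → E → F} (h : UB f p A L m) (K : ℝ) (hK : 0 ≤ K)
    (hA : ∀ i, A i ≤ K * A' i) (hA' : ∀ i, 0 ≤ A' i)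
    (hL : ∀ i, 0 ≤ L i) (hL' : ∀ i, L i ≤ L' i) : UB f p A' L' m := by
  obtain ⟨C, hC, h⟩ := h
  refine ⟨C * K, by positivity, fun i j hj => (h i j hj).trans ?_⟩
  have h1 : C * A i ≤ C * K * A' i := by
    have := mul_le_mul_of_nonneg_left (hA i) hC
    linarith
  have h2 : L i ^ j ≤ L' i ^ j := pow_le_pow_left₀ (hL i) (hL' i) j
  have := hA' i
  exact mul_le_mul h1 h2 (pow_nonneg (hL i) j) (by positivity)

theorem UB.bilin (b : F →L[ℝ] G →L[ℝ] H) {f : ι → E → F} {g : ι → E → G}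
    (hf : UB f p A L m) (hg : UB g p B L m) (sf : ∀ i, ContDiff ℝ (⊤ : ℕ∞) (f i))
    (sg : ∀ i, ContDiff ℝ (⊤ : ℕ∞) (g i)) (hA : ∀ i, 0 ≤ A i) (hB : ∀ i, 0 ≤ B i)
    (hL : ∀ i, 0 ≤ L i) : UB (fun i q => b (f i q) (g i q)) p (fun i => A i * B i) L m := by
  obtain ⟨C, hC, hf⟩ := hf
  obtain ⟨D, hD, hg⟩ := hg
  refine ⟨‖b‖ * (2 ^ m * (C * D)), by positivity, fun i j hj => ?_⟩
  refine (b.norm_iteratedFDeriv_le_of_bilinear (sf i) (sg i) (p i) (n := j)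
    (by exact_mod_cast le_top)).trans ?_
  have key : ∀ l ∈ Finset.range (j + 1), (j.choose l : ℝ) * ‖iteratedFDeriv ℝ l (f i) (p i)‖ *
      ‖iteratedFDeriv ℝ (j - l) (g i) (p i)‖ ≤ (j.choose l : ℝ) * (C * A i * (D * B i) * L i ^ j) := by
    intro l hl
    have hl' : l ≤ j := by simpa [Nat.lt_succ_iff] using hl
    have e : L i ^ j = L i ^ l * L i ^ (j - l) := by rw [← pow_add]; congr 1; omega
    rw [e, mul_assoc]
    refine mul_le_mul_of_nonneg_left ?_ (by positivity)
    calc _ ≤ (C * A i * L i ^ l) * (D * B i * L i ^ (j - l)) :=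
          mul_le_mul (hf i l (hl'.trans hj)) (hg i (j - l) ((Nat.sub_le _ _).trans hj))
            (norm_nonneg _) ((norm_nonneg _).trans (hf i l (hl'.trans hj)))
      _ = _ := by ring
  have h2 : ∑ l ∈ Finset.range (j + 1), (j.choose l : ℝ) = 2 ^ j := by
    exact_mod_cast Nat.sum_range_choose j
  have h3 : (2 : ℝ) ^ j ≤ 2 ^ m := pow_le_pow_right₀ (by norm_num) hj
  have hA := hA i
  have hB := hB i
  have hL := hL i
  calc _ ≤ ‖b‖ * (2 ^ j * (C * A i * (D * B i) * L i ^ j)) := by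
        refine mul_le_mul_of_nonneg_left ?_ (norm_nonneg b)
        rw [← h2, Finset.sum_mul]
        exact Finset.sum_le_sum key
    _ ≤ ‖b‖ * (2 ^ m * (C * A i * (D * B i) * L i ^ j)) := by gcongr
    _ = _ := by ring

theorem UB.clm (b : F →L[ℝ] G) {f : ι → E → F} (hf : UB f p A L m)
    (sf : ∀ i, ContDiff ℝ (⊤ : ℕ∞) (f i)) : UB (fun i q => b (f i q)) p A L m := by
  obtain ⟨C, hC, hf⟩ := hf
  refine ⟨‖b‖ * C, by positivity, fun i j hj => ?_⟩
  have := b.norm_iteratedFDeriv_comp_left (f := f i) (x := p i) (n := j) (sf i).contDiffAt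
    (by exact_mod_cast le_top)
  refine this.trans ?_
  calc _ ≤ ‖b‖ * (C * A i * L i ^ j) := mul_le_mul_of_nonneg_left (hf i j hj) (norm_nonneg _)
    _ = _ := by ring

theorem UB.add {f g : ι → E → F} (hf : UB f p A L m) (hg : UB g p A L m)
    (sf : ∀ i, ContDiff ℝ (⊤ : ℕ∞) (f i)) (sg : ∀ i, ContDiff ℝ (⊤ : ℕ∞) (g i)) :
    UB (fun i q => f i q + g i q) p A L m := by
  obtain ⟨C, hC, hf⟩ := hf
  obtain ⟨D, hD, hg⟩ := hg
  refine ⟨C + D, by positivity, fun i j hj => ?_⟩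
  have : iteratedFDeriv ℝ j (fun q => f i q + g i q) (p i)
      = iteratedFDeriv ℝ j (f i) (p i) + iteratedFDeriv ℝ j (g i) (p i) :=
    fun_iteratedFDeriv_add_apply ((sf i).of_le (by exact_mod_cast le_top)).contDiffAt
      ((sg i).of_le (by exact_mod_cast le_top)).contDiffAt
  rw [this]
  refine (norm_add_le _ _).trans ?_
  have := hf i j hj
  have := hg i j hj
  linarith [show (C + D) * A i * L i ^ j = C * A i * L i ^ j + D * A i * L i ^ j by ring]

theorem UB.const (c : ι → F) (hc : ∃ K, ∀ i, ‖c i‖ ≤ K * A i) (hA : ∀ i, 0 ≤ A i)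
    (hL : ∀ i, 0 ≤ L i) : UB (fun i (_ : E) => c i) p A L m := by
  obtain ⟨K, hK⟩ := hc
  refine ⟨|K|, by positivity, fun i j hj => ?_⟩
  have hA := hA i
  have hL := hL i
  rcases j with _ | j
  · simp only [norm_iteratedFDeriv_zero, pow_zero, mul_one]
    exact (hK i).trans (mul_le_mul_of_nonneg_right (le_abs_self K) hA)
  · rw [iteratedFDeriv_const_of_ne (by omega)]
    simp only [Pi.zero_apply, norm_zero]
    positivity

theorem UB.mul {f g : ι → E → ℂ}
    (hf : UB f p A L m) (hg : UB g p B L m) (sf : ∀ i, ContDiff ℝ (⊤ : ℕ∞) (f i))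
    (sg : ∀ i, ContDiff ℝ (⊤ : ℕ∞) (g i)) (hA : ∀ i, 0 ≤ A i) (hB : ∀ i, 0 ≤ B i)
    (hL : ∀ i, 0 ≤ L i) : UB (fun i q => f i q * g i q) p (fun i => A i * B i) L m :=
  UB.bilin (ContinuousLinearMap.mul ℝ ℂ) hf hg sf sg hA hB hL

theorem UB.derivBd {f : ι → E → F} (hf : UB f p A L (m + 1)) :
    UB (fun i => fderiv ℝ (f i)) p (fun i => A i * L i) L m := by
  obtain ⟨C, hC, hf⟩ := hf
  refine ⟨C, hC, fun i j hj => ?_⟩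
  rw [norm_iteratedFDeriv_fderiv]
  refine (hf i (j + 1) (by omega)).trans (le_of_eq (by ring))

theorem contDiff_fderiv_top {f : E → F} (sf : ContDiff ℝ (⊤ : ℕ∞) f) :
    ContDiff ℝ (⊤ : ℕ∞) (fderiv ℝ f) :=
  sf.fderiv_right (m := (⊤ : ℕ∞)) (by exact_mod_cast le_rfl)

theorem UB.ode {f : ι → E → ℂ} {g : ι → E → (E →L[ℝ] ℂ)}
    (sf : ∀ i, ContDiff ℝ (⊤ : ℕ∞) (f i)) (sg : ∀ i, ContDiff ℝ (⊤ : ℕ∞) (g i))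
    (hfg : ∀ i q, HasFDerivAt (f i) (f i q • g i q) q)
    (hA : ∀ i, 0 ≤ A i) (hL : ∀ i, 0 ≤ L i)
    (h0 : ∀ i, ‖f i (p i)‖ ≤ A i)
    (hg : ∀ m, UB f p A L m → UB g p L L m) : ∀ m, UB f p A L m := by
  intro m
  induction m with
  | zero =>
    refine ⟨1, by norm_num, fun i j hj => ?_⟩
    obtain rfl : j = 0 := by omega
    simpa using h0 i
  | succ m ih =>
    obtain ⟨C, hC, hb⟩ := UB.bilin (ContinuousLinearMap.lsmul ℝ ℂ) ih (hg m ih) sf sg hA hL hL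
    refine ⟨C + 1, by positivity, fun i j hj => ?_⟩
    have hA := hA i
    have hL := hL i
    rcases j with _ | j
    · simp only [norm_iteratedFDeriv_zero, pow_zero, mul_one]
      nlinarith [h0 i, mul_nonneg hC hA]
    · rw [← norm_iteratedFDeriv_fderiv]
      have e : fderiv ℝ (f i) = fun q => f i q • g i q := funext fun q => (hfg i q).fderiv
      rw [e]
      refine (hb i j (by omega)).trans ?_
      rw [pow_succ]
      have : 0 ≤ A i * (L i ^ j * L i) := by positivity
      nlinarith

/-- reciprocals -/
theorem UB.inv {w : ι → E → ℂ} (sw : ∀ i, ContDiff ℝ (⊤ : ℕ∞) (w i)) (hw : ∀ i q, w i q ≠ 0)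
    (hA : ∀ i, 0 ≤ A i) (hL : ∀ i, 1 ≤ L i) (hub : ∀ m, UB w p A (fun _ => 1) m)
    (K : ℝ) (hK : 0 ≤ K) (hKw : ∀ i, A i ≤ K * L i * ‖w i (p i)‖) :
    ∀ m, UB (fun i q => (w i q)⁻¹) p (fun i => ‖w i (p i)‖⁻¹) L m := by
  have sinv : ∀ i, ContDiff ℝ (⊤ : ℕ∞) (fun q => (w i q)⁻¹) := fun i => (sw i).inv (hw i)
  have hL0 : ∀ i, 0 ≤ L i := fun i => zero_le_one.trans (hL i)
  have sg : ∀ i, ContDiff ℝ (⊤ : ℕ∞) (fun q => (w i q)⁻¹ • fderiv ℝ (w i) q) :=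
    fun i => (sinv i).smul (contDiff_fderiv_top (sw i))
  refine UB.ode (g := fun i q => -((w i q)⁻¹ • fderiv ℝ (w i) q)) sinv (fun i => (sg i).neg) ?_
    (fun i => by positivity) hL0 (fun i => by simp) ?_
  · intro i q
    have h1 : HasFDerivAt (w i) (fderiv ℝ (w i) q) q :=
      ((sw i).differentiable (by simp) q).hasFDerivAt
    have h2 := (hasDerivAt_inv (hw i q)).comp_hasFDerivAt_of_eq q (h1) rfl
    have e : (w i q)⁻¹ • -((w i q)⁻¹ • fderiv ℝ (w i) q) = -(w i q ^ 2)⁻¹ • fderiv ℝ (w i) q := by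
      have := hw i q
      ext v
      simp only [smul_apply, neg_apply, smul_eq_mul]
      field_simp
    simp only [e]
    exact h2
  · intro m hm
    have h1 : UB (fun i => fderiv ℝ (w i)) p A L m :=
      (UB.derivBd (hub (m + 1))).mono 1 zero_le_one (fun i => by simp) hA (fun _ => zero_le_one) hL
    have h2 := UB.bilin (ContinuousLinearMap.lsmul ℝ ℂ) hm h1 sinv
      (fun i => contDiff_fderiv_top (sw i)) (fun i => by positivity) hA hL0
    have h3 := UB.clm (-(ContinuousLinearMap.id ℝ (E →L[ℝ] ℂ))) h2 sg
    refine h3.mono K hK (fun i => ?_) hL0 hL0 (fun i => le_rfl)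
    have : 0 < ‖w i (p i)‖ := norm_pos_iff.2 (hw i _)
    rw [inv_mul_le_iff₀ this]
    linarith [hKw i]

theorem UB.logderiv {w : ι → E → ℂ} (sw : ∀ i, ContDiff ℝ (⊤ : ℕ∞) (w i)) (hw : ∀ i q, w i q ≠ 0)
    (hA : ∀ i, 0 ≤ A i) (hL : ∀ i, 1 ≤ L i) (hub : ∀ m, UB w p A (fun _ => 1) m)
    (K : ℝ) (hK : 0 ≤ K) (hKw : ∀ i, A i ≤ K * L i * ‖w i (p i)‖) (m : ℕ) :
    UB (fun i q => (w i q)⁻¹ • fderiv ℝ (w i) q) p L L m := by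
  have sinv : ∀ i, ContDiff ℝ (⊤ : ℕ∞) (fun q => (w i q)⁻¹) := fun i => (sw i).inv (hw i)
  have hL0 : ∀ i, 0 ≤ L i := fun i => zero_le_one.trans (hL i)
  have hm := UB.inv sw hw hA hL hub K hK hKw m
  have h1 : UB (fun i => fderiv ℝ (w i)) p A L m :=
    (UB.derivBd (hub (m + 1))).mono 1 zero_le_one (fun i => by simp) hA (fun _ => zero_le_one) hL
  have h2 := UB.bilin (ContinuousLinearMap.lsmul ℝ ℂ) hm h1 sinv
    (fun i => contDiff_fderiv_top (sw i)) (fun i => by positivity) hA hL0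
  refine h2.mono K hK (fun i => ?_) hL0 hL0 (fun i => le_rfl)
  have : 0 < ‖w i (p i)‖ := norm_pos_iff.2 (hw i _)
  rw [inv_mul_le_iff₀ this]
  linarith [hKw i]

/-- Main abstract estimate: `f' = f · b(w'/w)` with `b` a fixed linear map. -/
theorem UB.power {w f : ι → E → ℂ} (b : ℂ →L[ℝ] ℂ)
    (sw : ∀ i, ContDiff ℝ (⊤ : ℕ∞) (w i)) (hw : ∀ i q, w i q ≠ 0)
    (sf : ∀ i, ContDiff ℝ (⊤ : ℕ∞) (f i))
    (hf : ∀ i q, HasFDerivAt (f i) (f i q • b.comp ((w i q)⁻¹ • fderiv ℝ (w i) q)) q)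
    (hA : ∀ i, 0 ≤ A i) (hL : ∀ i, 1 ≤ L i) (hub : ∀ m, UB w p A (fun _ => 1) m)
    (K : ℝ) (hK : 0 ≤ K) (hKw : ∀ i, A i ≤ K * L i * ‖w i (p i)‖) (m : ℕ) :
    UB f p (fun i => ‖f i (p i)‖) L m := by
  have sg : ∀ i, ContDiff ℝ (⊤ : ℕ∞) (fun q => (w i q)⁻¹ • fderiv ℝ (w i) q) :=
    fun i => ((sw i).inv (hw i)).smul (contDiff_fderiv_top (sw i))
  refine UB.ode (g := fun i q => b.comp ((w i q)⁻¹ • fderiv ℝ (w i) q)) sf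
    (fun i => contDiff_const.clm_comp (sg i)) hf (fun i => norm_nonneg _)
    (fun i => zero_le_one.trans (hL i)) (fun i => le_rfl) (fun m _ => ?_) m
  exact UB.clm (ContinuousLinearMap.compL ℝ E ℂ ℂ b)
    (UB.logderiv sw hw hA hL hub K hK hKw m) sg

theorem UB.comp_real {u : ι → E → ℝ} (φ : ℝ → ℝ) (sφ : ContDiff ℝ (⊤ : ℕ∞) φ)
    (hφ : ∀ m, ∃ C, ∀ t, ‖iteratedFDeriv ℝ m φ t‖ ≤ C) (su : ∀ i, ContDiff ℝ (⊤ : ℕ∞) (u i))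
    (hu : UB u p (fun _ => 1) (fun _ => 1) m) :
    UB (fun i q => φ (u i q)) p (fun _ => 1) (fun _ => 1) m := by
  obtain ⟨C, hC, hu⟩ := hu
  choose D hD using hφ
  have hD0 : ∀ m, 0 ≤ D m := fun m => (norm_nonneg _).trans (hD m 0)
  refine ⟨m.factorial * (∑ l ∈ Finset.range (m + 1), D l) * (C + 1) ^ m, ?_, fun i j hj => ?_⟩
  · have := Finset.sum_nonneg (s := Finset.range (m + 1)) (fun l _ => hD0 l)
    positivity
  · have hs := Finset.sum_nonneg (s := Finset.range (m + 1)) (fun l _ => hD0 l)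
    have := norm_iteratedFDeriv_comp_le (g := φ) (f := u i) (n := j) sφ (su i)
      (by exact_mod_cast le_top) (p i) (C := ∑ l ∈ Finset.range (m + 1), D l) (D := C + 1)
      (fun l hl => (hD l _).trans (Finset.single_le_sum (f := D) (fun l _ => hD0 l)
        (by simp; omega))) (fun l hl1 hl => by
          have h1 := hu i l (hl.trans hj)
          have h2 : C + 1 ≤ (C + 1) ^ l := le_self_pow₀ (by linarith) (by omega)
          simp at h1
          linarith)
    simp only [one_pow, mul_one]
    refine this.trans ?_
    gcongr
    linarith

end UBsec


section sqrtsec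

theorem ssqrt_eq {w : ℂ} (hw : -w ∈ Complex.slitPlane) :
    ssqrt w = Complex.I * (-w) ^ (1 / 2 : ℂ) := by
  have hw0 : -w ≠ 0 := Complex.slitPlane_ne_zero hw
  have hre : 0 < ((-w) ^ (1 / 2 : ℂ)).re := by
    rw [Complex.cpow_def_of_ne_zero hw0, Complex.exp_re]
    have h1 : (Complex.log (-w) * (1 / 2)).im = (-w).arg / 2 := by
      rw [show (1 / 2 : ℂ) = ((1 / 2 : ℝ) : ℂ) by push_cast; rfl, Complex.im_mul_ofReal,
        Complex.log_im]
      ring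
    rw [h1]
    have h2 := Complex.neg_pi_lt_arg (-w)
    have h3 : (-w).arg < Real.pi :=
      lt_of_le_of_ne (Complex.arg_le_pi _) (Complex.mem_slitPlane_iff_arg.1 hw).1
    exact mul_pos (Real.exp_pos _) (Real.cos_pos_of_mem_Ioo ⟨by linarith, by linarith⟩)
  have sq : ∀ u : ℂ, (u ^ (1 / 2 : ℂ)) ^ 2 = u := by
    intro u
    simp
  have him : (Complex.I * (-w) ^ (1 / 2 : ℂ)).im = ((-w) ^ (1 / 2 : ℂ)).re := by
    simp [Complex.mul_im]
  have h2 : (w ^ (1 / 2 : ℂ)) ^ 2 = (Complex.I * (-w) ^ (1 / 2 : ℂ)) ^ 2 := by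
    rw [mul_pow, sq, sq, Complex.I_sq]; ring
  rcases sq_eq_sq_iff_eq_or_eq_neg.1 h2 with h | h
  · rw [ssqrt, if_pos, h]
    rw [h, him]; exact hre.le
  · rw [ssqrt, if_neg, h, neg_neg]
    rw [h, Complex.neg_im, him]; linarith

theorem ssqrt_sq (w : ℂ) : ssqrt w ^ 2 = w := by
  have sq : (w ^ (1 / 2 : ℂ)) ^ 2 = w := by
    simp
  rw [ssqrt]; split_ifs
  · exact sq
  · rw [neg_sq, sq]

variable {E : Type*} [NormedAddCommGroup E] [NormedSpace ℝ E]

theorem ssqrt_comp_contDiff {w : E → ℂ} (sw : ContDiff ℝ (⊤ : ℕ∞) w)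
    (hw : ∀ q, -w q ∈ Complex.slitPlane) : ContDiff ℝ (⊤ : ℕ∞) (fun q => ssqrt (w q)) := by
  have e : (fun q => ssqrt (w q)) = fun q => Complex.I * (-w q) ^ (1 / 2 : ℂ) :=
    funext fun q => ssqrt_eq (hw q)
  rw [e]
  refine contDiff_const.mul (contDiff_iff_contDiffAt.2 fun q => ?_)
  have h1 : ContDiffAt ℂ (⊤ : ℕ∞) (fun u : ℂ => u ^ (1 / 2 : ℂ)) (-w q) :=
    (analyticAt_id.cpow analyticAt_const (hw q)).contDiffAt
  exact (h1.restrict_scalars ℝ).comp q sw.neg.contDiffAt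

theorem ssqrt_comp_hasFDerivAt {w : E → ℂ} (sw : ContDiff ℝ (⊤ : ℕ∞) w)
    (hw : ∀ q, -w q ∈ Complex.slitPlane) (q : E) :
    HasFDerivAt (fun q => ssqrt (w q))
      (ssqrt (w q) • ((1 / 2 : ℂ) • ((w q)⁻¹ • fderiv ℝ w q))) q := by
  have e : (fun q => ssqrt (w q)) = fun q => Complex.I * (-w q) ^ (1 / 2 : ℂ) :=
    funext fun q => ssqrt_eq (hw q)
  have hw0 : -w q ≠ 0 := Complex.slitPlane_ne_zero (hw q)
  have hw1 : w q ≠ 0 := fun h => hw0 (by simp [h])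
  rw [e, ssqrt_eq (hw q)]
  have h1 : HasFDerivAt w (fderiv ℝ w q) q := (sw.differentiable (by simp) q).hasFDerivAt
  have h2 := ((hasDerivAt_id (-w q)).cpow_const (c := (1 / 2 : ℂ)) (hw q)).const_mul Complex.I
  have h3 := h2.comp_hasFDerivAt_of_eq q h1.neg rfl
  have e2 : (Complex.I * (-w q) ^ (1 / 2 : ℂ)) • ((1 / 2 : ℂ) • ((w q)⁻¹ • fderiv ℝ w q)) =
      (Complex.I * (1 / 2 * (-w q) ^ (1 / 2 - 1 : ℂ) * 1)) • -fderiv ℝ w q := by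
    rw [Complex.cpow_sub _ _ hw0, Complex.cpow_one, smul_neg, ← neg_smul, smul_smul, smul_smul]
    congr 1
    field_simp
  rw [e2]
  exact h3

theorem zpow_hasFDerivAt {f : E → ℂ} {g : E →L[ℝ] ℂ} {q : E} (hf : HasFDerivAt f (f q • g) q)
    (h0 : f q ≠ 0) (k : ℤ) : HasFDerivAt (fun q => f q ^ k) (f q ^ k • ((k : ℂ) • g)) q := by
  have h := (hasDerivAt_zpow k (f q) (Or.inl h0)).comp_hasFDerivAt_of_eq q hf rfl
  have e : f q ^ k • ((k : ℂ) • g) = ((k : ℂ) * f q ^ (k - 1)) • (f q • g) := by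
    rw [smul_smul, smul_smul, zpow_sub_one₀ h0]
    congr 1
    field_simp
  rw [e]
  exact h

theorem norm_hasFDerivAt {f : E → ℂ} {g : E →L[ℝ] ℂ} {q : E} (hf : HasFDerivAt f (f q • g) q)
    (h0 : f q ≠ 0) : HasFDerivAt (fun q => (‖f q‖ : ℂ))
      ((‖f q‖ : ℂ) • (Complex.ofRealCLM.comp (Complex.reCLM)).comp g) q := by
  have hn : 0 < ‖f q‖ := norm_pos_iff.2 h0
  have h1 := (hf.norm_sq).sqrt (by positivity)
  simp only [Real.sqrt_sq (norm_nonneg _)] at h1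
  have h2 := Complex.ofRealCLM.hasFDerivAt.comp q h1
  refine h2.congr_fderiv ?_
  ext v
  have : inner ℝ (f q) (f q * g v) = ‖f q‖ ^ 2 * (g v).re := by
    rw [Complex.inner, show f q * g v * (starRingEnd ℂ) (f q) = (starRingEnd ℂ) (f q) * f q * g v by ring,
      Complex.conj_mul']
    rw [← Complex.ofReal_pow, Complex.re_ofReal_mul]
  simp [this]
  have hn' : (‖f q‖ : ℂ) ≠ 0 := by exact_mod_cast hn.ne'
  field_simp

end sqrtsec


section concrete

variable {n : ℕ}

/-- Dilation in the `ξ'` variable. -/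
def scl (l : ℝ) : (EuclideanSpace ℝ (Fin n) × EuclideanSpace ℝ (Fin n)) →L[ℝ]
    (EuclideanSpace ℝ (Fin n) × EuclideanSpace ℝ (Fin n)) :=
  (ContinuousLinearMap.fst ℝ _ _).prod (l • ContinuousLinearMap.snd ℝ _ _)

theorem scl_apply (l : ℝ) (q : EuclideanSpace ℝ (Fin n) × EuclideanSpace ℝ (Fin n)) :
    scl l q = (q.1, l • q.2) := rfl

/-- The rescaled point. -/
def scpt (p : EuclideanSpace ℝ (Fin n) × EuclideanSpace ℝ (Fin n)) :
    EuclideanSpace ℝ (Fin n) × EuclideanSpace ℝ (Fin n) := (p.1, (jap p.2)⁻¹ • p.2)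

theorem jap_one_le (ξ : EuclideanSpace ℝ (Fin n)) : 1 ≤ jap ξ := by
  rw [jap, Real.one_le_sqrt]; nlinarith [sq_nonneg ‖ξ‖]

theorem jap_pos (ξ : EuclideanSpace ℝ (Fin n)) : 0 < jap ξ := zero_lt_one.trans_le (jap_one_le ξ)

theorem jap_sq (ξ : EuclideanSpace ℝ (Fin n)) : jap ξ ^ 2 = 1 + ‖ξ‖ ^ 2 :=
  Real.sq_sqrt (by positivity)

theorem scl_scpt (p : EuclideanSpace ℝ (Fin n) × EuclideanSpace ℝ (Fin n)) :
    scl (jap p.2) (scpt p) = p := by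
  rw [scl_apply, scpt]
  simp only [smul_smul]
  rw [mul_inv_cancel₀ (jap_pos _).ne', one_smul]

theorem scpt_norm (p : EuclideanSpace ℝ (Fin n) × EuclideanSpace ℝ (Fin n)) :
    ‖(scpt p).2‖ ≤ 1 := by
  have h := jap_pos p.2
  have h2 : ‖p.2‖ ≤ jap p.2 := Real.le_sqrt_of_sq_le (by linarith)
  simp only [scpt]
  rw [norm_smul, norm_inv, Real.norm_of_nonneg h.le, inv_mul_le_iff₀ h]
  linarith

theorem Dmix_le {a : EuclideanSpace ℝ (Fin n) × EuclideanSpace ℝ (Fin n) → ℂ}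
    (sa : ContDiff ℝ (⊤ : ℕ∞) a) (α β : ℕ)
    (v : Fin α → EuclideanSpace ℝ (Fin n)) (w : Fin β → EuclideanSpace ℝ (Fin n))
    (hv : ∀ i, ‖v i‖ ≤ 1) (hw : ∀ i, ‖w i‖ ≤ 1)
    (p : EuclideanSpace ℝ (Fin n) × EuclideanSpace ℝ (Fin n)) :
    ‖Dmix n a α β v w p‖ ≤
      ‖iteratedFDeriv ℝ (α + β) (fun q => a (scl (jap p.2) q)) (scpt p)‖ * ((jap p.2)⁻¹) ^ β := by
  have h := jap_pos p.2
  have e := (scl (n := n) (jap p.2)).iteratedFDeriv_comp_right (i := α + β) sa (scpt p)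
    (by exact_mod_cast le_top)
  set m : Fin (α + β) → EuclideanSpace ℝ (Fin n) × EuclideanSpace ℝ (Fin n) :=
    Fin.append (fun i => (v i, 0)) (fun i => (0, (jap p.2)⁻¹ • w i)) with hm
  have e2 : Dmix n a α β v w p = iteratedFDeriv ℝ (α + β) (a ∘ scl (jap p.2)) (scpt p) m := by
    rw [e, ContinuousMultilinearMap.compContinuousLinearMap_apply, scl_scpt, Dmix]
    congr 1
    ext1 i
    refine Fin.addCases (fun i => ?_) (fun i => ?_) i
    · simp [hm, scl_apply]
    · simp [hm, scl_apply, smul_smul, mul_inv_cancel₀ h.ne']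
  rw [e2]
  refine (ContinuousMultilinearMap.le_opNorm _ _).trans ?_
  refine mul_le_mul_of_nonneg_left ?_ (norm_nonneg _)
  rw [Fin.prod_univ_add]
  have h1 : ∏ i : Fin α, ‖m (Fin.castAdd β i)‖ ≤ 1 := by
    refine Finset.prod_le_one (fun _ _ => norm_nonneg _) (fun i _ => ?_)
    simp [hm, hv i]
  have h2 : ∏ i : Fin β, ‖m (Fin.natAdd α i)‖ ≤ ((jap p.2)⁻¹) ^ β := by
    have : ∏ i : Fin β, ‖m (Fin.natAdd α i)‖ ≤ ∏ i : Fin β, (jap p.2)⁻¹ := by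
      refine Finset.prod_le_prod (fun _ _ => norm_nonneg _) (fun i _ => ?_)
      simp only [hm, Fin.append_right, Prod.norm_mk, norm_zero, norm_smul, norm_inv,
        Real.norm_of_nonneg h.le]
      refine max_le (by positivity) ?_
      exact mul_le_of_le_one_right (by positivity) (hw i)
    simpa using this
  calc _ ≤ 1 * ((jap p.2)⁻¹) ^ β :=
        mul_le_mul h1 h2 (Finset.prod_nonneg fun _ _ => norm_nonneg _) zero_le_one
    _ = _ := one_mul _

theorem Dmix_zero {a : EuclideanSpace ℝ (Fin n) × EuclideanSpace ℝ (Fin n) → ℂ} (α β : ℕ)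
    (v : Fin α → EuclideanSpace ℝ (Fin n)) (w : Fin β → EuclideanSpace ℝ (Fin n))
    (p : EuclideanSpace ℝ (Fin n) × EuclideanSpace ℝ (Fin n))
    (ha : a =ᶠ[nhds p] fun _ => 0) : Dmix n a α β v w p = 0 := by
  rw [Dmix, (ha.iteratedFDeriv (𝕜 := ℝ) (α + β)).eq_of_nhds]
  simp

variable {ι : Type*}

theorem UB_fst {F : Type*} [NormedAddCommGroup F] [NormedSpace ℝ F]
    {f : EuclideanSpace ℝ (Fin n) → F} (sf : ContDiff ℝ (⊤ : ℕ∞) f)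
    (hf : ∀ m : ℕ, ∃ C : ℝ, ∀ x, ‖iteratedFDeriv ℝ m f x‖ ≤ C)
    (p : ι → EuclideanSpace ℝ (Fin n) × EuclideanSpace ℝ (Fin n)) (m : ℕ) :
    UB (fun (_ : ι) (q : EuclideanSpace ℝ (Fin n) × EuclideanSpace ℝ (Fin n)) => f q.1) p
      (fun _ => 1) (fun _ => 1) m := by
  choose D hD using hf
  have hD0 : ∀ m, 0 ≤ D m := fun m => (norm_nonneg _).trans (hD m 0)
  refine ⟨∑ l ∈ Finset.range (m + 1), D l, Finset.sum_nonneg fun l _ => hD0 l, fun i j hj => ?_⟩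
  have e := (ContinuousLinearMap.fst ℝ (EuclideanSpace ℝ (Fin n))
    (EuclideanSpace ℝ (Fin n))).iteratedFDeriv_comp_right (i := j) sf (p i)
    (by exact_mod_cast le_top)
  have h1 : ‖iteratedFDeriv ℝ j (f ∘ (ContinuousLinearMap.fst ℝ (EuclideanSpace ℝ (Fin n))
    (EuclideanSpace ℝ (Fin n)))) (p i)‖ ≤ D j := by
    rw [e]
    refine (ContinuousMultilinearMap.norm_compContinuousLinearMap_le _ _).trans ?_
    refine (mul_le_of_le_one_right (norm_nonneg _) ?_).trans (hD j _)
    exact Finset.prod_le_one (fun _ _ => norm_nonneg _)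
      (fun _ _ => ContinuousLinearMap.norm_fst_le ..)
  simp only [one_pow, mul_one]
  exact h1.trans (Finset.single_le_sum (f := D) (fun l _ => hD0 l) (by simp; omega))

theorem UB_snd (p : ι → EuclideanSpace ℝ (Fin n) × EuclideanSpace ℝ (Fin n))
    (hp : ∀ i, ‖(p i).2‖ ≤ 1) (m : ℕ) :
    UB (fun (_ : ι) (q : EuclideanSpace ℝ (Fin n) × EuclideanSpace ℝ (Fin n)) => q.2) p
      (fun _ => 1) (fun _ => 1) m := by
  have hc : UB (fun (_ : ι) (q : EuclideanSpace ℝ (Fin n) × EuclideanSpace ℝ (Fin n)) =>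
      ContinuousLinearMap.snd ℝ (EuclideanSpace ℝ (Fin n)) (EuclideanSpace ℝ (Fin n))) p
      (fun _ => 1) (fun _ => 1) m :=
    UB.const _ ⟨_, fun i => by simpa using le_rfl⟩ (fun _ => zero_le_one) (fun _ => zero_le_one)
  obtain ⟨C, hC, hc⟩ := hc
  refine ⟨C + 1, by positivity, fun i j hj => ?_⟩
  rcases j with _ | j
  · simp only [norm_iteratedFDeriv_zero, pow_zero, mul_one]
    linarith [hp i]
  · rw [← norm_iteratedFDeriv_fderiv]
    have e : fderiv ℝ (fun q : EuclideanSpace ℝ (Fin n) × EuclideanSpace ℝ (Fin n) => q.2) =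
      fun _ => ContinuousLinearMap.snd ℝ (EuclideanSpace ℝ (Fin n)) (EuclideanSpace ℝ (Fin n)) :=
      funext fun q => fderiv_snd
    rw [e]
    have := hc i j (by omega)
    simp only [one_pow, mul_one] at this ⊢
    linarith

end concrete


section concrete2

variable {n : ℕ} {ι : Type*}
  {R₀ : EuclideanSpace ℝ (Fin n) → (EuclideanSpace ℝ (Fin n) →L[ℝ] EuclideanSpace ℝ (Fin n))}
  {n₀ : EuclideanSpace ℝ (Fin n) → ℝ}

theorem rZero_contDiff (sR : ContDiff ℝ (⊤ : ℕ∞) R₀) : ContDiff ℝ (⊤ : ℕ∞) (rZero n R₀) := by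
  have h1 : ContDiff ℝ (⊤ : ℕ∞) (fun q : EuclideanSpace ℝ (Fin n) × EuclideanSpace ℝ (Fin n) =>
    R₀ q.1 q.2) := (sR.comp contDiff_fst).clm_apply contDiff_snd
  exact h1.inner ℝ contDiff_snd

theorem rZero_scl (l : ℝ) (q : EuclideanSpace ℝ (Fin n) × EuclideanSpace ℝ (Fin n)) :
    rZero n R₀ (scl l q) = l ^ 2 * rZero n R₀ q := by
  simp only [rZero, scl_apply, map_smul, inner_smul_left, inner_smul_right]
  simp
  ring

theorem rZero_UB (sR : ContDiff ℝ (⊤ : ℕ∞) R₀)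
    (hR : ∀ m : ℕ, ∃ C : ℝ, ∀ x, ‖iteratedFDeriv ℝ m R₀ x‖ ≤ C)
    (p : ι → EuclideanSpace ℝ (Fin n) × EuclideanSpace ℝ (Fin n))
    (hp : ∀ i, ‖(p i).2‖ ≤ 1) (m : ℕ) :
    UB (fun _ : ι => rZero n R₀) p (fun _ => 1) (fun _ => 1) m := by
  have z1 : ∀ i : ι, (0 : ℝ) ≤ (fun _ => 1) i := fun _ => zero_le_one
  have s1 : ∀ i : ι, ContDiff ℝ (⊤ : ℕ∞)
    (fun q : EuclideanSpace ℝ (Fin n) × EuclideanSpace ℝ (Fin n) => R₀ q.1) :=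
    fun _ => sR.comp contDiff_fst
  have s2 : ∀ i : ι, ContDiff ℝ (⊤ : ℕ∞)
    (fun q : EuclideanSpace ℝ (Fin n) × EuclideanSpace ℝ (Fin n) => q.2) := fun _ => contDiff_snd
  have s3 : ∀ i : ι, ContDiff ℝ (⊤ : ℕ∞)
    (fun q : EuclideanSpace ℝ (Fin n) × EuclideanSpace ℝ (Fin n) => R₀ q.1 q.2) :=
    fun i => (s1 i).clm_apply (s2 i)
  have h1 := UB.bilin (ContinuousLinearMap.id ℝ
    (EuclideanSpace ℝ (Fin n) →L[ℝ] EuclideanSpace ℝ (Fin n))) (UB_fst sR hR p m)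
    (UB_snd p hp m) s1 s2 z1 z1 z1
  have h2 := UB.bilin (innerSL ℝ) (h1.mono (A' := fun _ => 1) (L' := fun _ => 1) 1 zero_le_one
    (by simp) z1 z1 (by simp)) (UB_snd p hp m) s3 s2 z1 z1 z1
  exact h2.mono 1 zero_le_one (by simp) z1 z1 (by simp)

/-- the function under the root -/
def wfun (R₀ : EuclideanSpace ℝ (Fin n) → (EuclideanSpace ℝ (Fin n) →L[ℝ] EuclideanSpace ℝ (Fin n)))
    (n₀ : EuclideanSpace ℝ (Fin n) → ℝ) (z : ℂ)
    (p : EuclideanSpace ℝ (Fin n) × EuclideanSpace ℝ (Fin n)) : ℂ :=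
  -(rZero n R₀ p : ℂ) + z * (n₀ p.1 : ℂ)

theorem rho_eq (z : ℂ) (p) : rho n R₀ n₀ z p = ssqrt (wfun R₀ n₀ z p) := rfl

theorem rho_norm_sq (z : ℂ) (p) : ‖rho n R₀ n₀ z p‖ ^ 2 = ‖wfun R₀ n₀ z p‖ := by
  rw [rho_eq, ← norm_pow, ssqrt_sq]

theorem wfun_contDiff (sR : ContDiff ℝ (⊤ : ℕ∞) R₀) (sn : ContDiff ℝ (⊤ : ℕ∞) n₀) (z : ℂ) :
    ContDiff ℝ (⊤ : ℕ∞) (wfun R₀ n₀ z) := by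
  have h1 : ContDiff ℝ (⊤ : ℕ∞) (fun p => (rZero n R₀ p : ℂ)) :=
    Complex.ofRealCLM.contDiff.comp (rZero_contDiff sR)
  have h2 : ContDiff ℝ (⊤ : ℕ∞)
    (fun p : EuclideanSpace ℝ (Fin n) × EuclideanSpace ℝ (Fin n) => (n₀ p.1 : ℂ)) :=
    Complex.ofRealCLM.contDiff.comp (sn.comp contDiff_fst)
  exact h1.neg.add (contDiff_const.mul h2)

theorem wfun_slit (hr : ∀ p, 0 ≤ rZero n R₀ p) (hn : ∀ x, 0 < n₀ x) {z : ℂ} (hz : Zall z) (p) :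
    -wfun R₀ n₀ z p ∈ Complex.slitPlane := by
  rw [Complex.mem_slitPlane_iff]
  have h1 := hr p
  have h2 := hn p.1
  by_cases him : z.im = 0
  · left
    have hre : z.re = -1 := by
      rcases hz with ⟨_, h, _⟩ | ⟨h, _⟩ | ⟨_, h⟩
      · simp [him] at h
      · exact h
      · simp [him] at h
    simp [wfun, hre]
    linarith
  · right
    simp [wfun, him, h2.ne']

theorem Zall_norm {z : ℂ} (hz : Zall z) : ‖z‖ ≤ 2 := by
  have h1 : |z.re| ≤ 1 := by
    rcases hz with ⟨h, _, _⟩ | ⟨h, _⟩ | ⟨h, _⟩ <;> simp [h]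
  have h2 : |z.im| ≤ 1 := by
    rcases hz with ⟨_, _, h⟩ | ⟨_, h⟩ | ⟨_, h⟩ <;> simp [h]
  linarith [Complex.norm_le_abs_re_add_abs_im z]

theorem wfun_UB (sR : ContDiff ℝ (⊤ : ℕ∞) R₀)
    (hR : ∀ m : ℕ, ∃ C : ℝ, ∀ x, ‖iteratedFDeriv ℝ m R₀ x‖ ≤ C)
    (sn : ContDiff ℝ (⊤ : ℕ∞) n₀)
    (hnb : ∀ m : ℕ, ∃ C : ℝ, ∀ x, ‖iteratedFDeriv ℝ m n₀ x‖ ≤ C)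
    (p : ι → EuclideanSpace ℝ (Fin n) × EuclideanSpace ℝ (Fin n))
    (z : ι → ℂ) (hz : ∀ i, Zall (z i)) (m : ℕ) :
    UB (fun i q => wfun R₀ n₀ (z i) (scl (jap (p i).2) q)) (fun i => scpt (p i))
      (fun i => jap (p i).2 ^ 2) (fun _ => 1) m := by
  have z1 : ∀ i : ι, (0 : ℝ) ≤ (fun _ => 1) i := fun _ => zero_le_one
  have zA : ∀ i : ι, 0 ≤ jap (p i).2 ^ 2 := fun _ => by positivity
  have oA : ∀ i : ι, 1 ≤ jap (p i).2 ^ 2 := fun i => one_le_pow₀ (jap_one_le _)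
  have s1 : ContDiff ℝ (⊤ : ℕ∞) (fun p => (rZero n R₀ p : ℂ)) :=
    Complex.ofRealCLM.contDiff.comp (rZero_contDiff sR)
  have s2 : ContDiff ℝ (⊤ : ℕ∞)
    (fun p : EuclideanSpace ℝ (Fin n) × EuclideanSpace ℝ (Fin n) => (n₀ p.1 : ℂ)) :=
    Complex.ofRealCLM.contDiff.comp (sn.comp contDiff_fst)
  have u1 : UB (fun (_ : ι) p => (rZero n R₀ p : ℂ)) (fun i => scpt (p i)) (fun _ => 1)
      (fun _ => 1) m :=
    UB.clm Complex.ofRealCLM (rZero_UB sR hR _ (fun i => scpt_norm (p i)) m)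
      (fun _ => rZero_contDiff sR)
  have u2 : UB (fun (_ : ι) (p : EuclideanSpace ℝ (Fin n) × EuclideanSpace ℝ (Fin n)) =>
      (n₀ p.1 : ℂ)) (fun i => scpt (p i)) (fun _ => 1) (fun _ => 1) m :=
    UB.clm Complex.ofRealCLM (UB_fst sn hnb _ m) (fun _ => sn.comp contDiff_fst)
  have u3 := UB.mul (UB.const (p := fun i => scpt (p i)) (m := m) (L := fun _ => 1)
    (A := fun i => jap (p i).2 ^ 2) (fun i => -((jap (p i).2 : ℂ)) ^ 2)
    ⟨1, fun i => by simp [abs_of_pos (jap_pos _)]⟩ zA z1) u1 (fun _ => contDiff_const)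
    (fun _ => s1) zA z1 z1
  have u4 := UB.mul (UB.const (p := fun i => scpt (p i)) (m := m) (L := fun _ => 1)
    (A := fun i => jap (p i).2 ^ 2) z ⟨2, fun i => by
      have := Zall_norm (hz i)
      have := oA i
      linarith⟩ zA z1) u2 (fun _ => contDiff_const)
    (fun _ => s2) zA z1 z1
  have u5 := UB.add u3 u4 (fun _ => contDiff_const.mul s1) (fun _ => contDiff_const.mul s2)
  have e : (fun i q => wfun R₀ n₀ (z i) (scl (jap (p i).2) q)) = fun i q =>
      -((jap (p i).2 : ℂ)) ^ 2 * (rZero n R₀ q : ℂ) + z i * (n₀ q.1 : ℂ) := by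
    ext i q
    rw [wfun, rZero_scl, scl_apply]
    push_cast
    ring
  rw [e]
  exact u5.mono 1 zero_le_one (by simp) zA z1 (by simp)

theorem rho_UB (sR : ContDiff ℝ (⊤ : ℕ∞) R₀)
    (hR : ∀ m : ℕ, ∃ C : ℝ, ∀ x, ‖iteratedFDeriv ℝ m R₀ x‖ ≤ C)
    (sn : ContDiff ℝ (⊤ : ℕ∞) n₀)
    (hnb : ∀ m : ℕ, ∃ C : ℝ, ∀ x, ‖iteratedFDeriv ℝ m n₀ x‖ ≤ C)
    (hr : ∀ p, 0 ≤ rZero n R₀ p) (hn : ∀ x, 0 < n₀ x)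
    (p : ι → EuclideanSpace ℝ (Fin n) × EuclideanSpace ℝ (Fin n))
    (z : ι → ℂ) (hz : ∀ i, Zall (z i)) (L : ι → ℝ) (hL : ∀ i, 1 ≤ L i)
    (K : ℝ) (hK : 0 ≤ K) (hKw : ∀ i, jap (p i).2 ^ 2 ≤ K * L i * ‖wfun R₀ n₀ (z i) (p i)‖)
    (k : ℤ) (m : ℕ) :
    UB (fun i q => rho n R₀ n₀ (z i) (scl (jap (p i).2) q) ^ k) (fun i => scpt (p i))
      (fun i => ‖rho n R₀ n₀ (z i) (p i)‖ ^ k) L m ∧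
    UB (fun i q => (‖rho n R₀ n₀ (z i) (scl (jap (p i).2) q)‖ : ℂ) ^ k) (fun i => scpt (p i))
      (fun i => ‖rho n R₀ n₀ (z i) (p i)‖ ^ k) L m := by
  have sw : ∀ i, ContDiff ℝ (⊤ : ℕ∞) (fun q => wfun R₀ n₀ (z i) (scl (jap (p i).2) q)) :=
    fun i => (wfun_contDiff sR sn (z i)).comp (scl (n := n) _).contDiff
  have hs : ∀ i q, -wfun R₀ n₀ (z i) (scl (jap (p i).2) q) ∈ Complex.slitPlane :=
    fun i q => wfun_slit hr hn (hz i) _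
  have hw : ∀ i q, wfun R₀ n₀ (z i) (scl (jap (p i).2) q) ≠ 0 := fun i q h => by
    have := Complex.slitPlane_ne_zero (hs i q)
    simp [h] at this
  have hr0 : ∀ i q, rho n R₀ n₀ (z i) (scl (jap (p i).2) q) ≠ 0 := fun i q h => by
    have := rho_norm_sq (R₀ := R₀) (n₀ := n₀) (z i) (scl (jap (p i).2) q)
    rw [h] at this
    simp at this
    exact hw i q (norm_eq_zero.1 this.symm)
  have sr : ∀ i, ContDiff ℝ (⊤ : ℕ∞) (fun q => rho n R₀ n₀ (z i) (scl (jap (p i).2) q)) :=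
    fun i => ssqrt_comp_contDiff (sw i) (hs i)
  have hfr : ∀ i q, _ := fun i q => ssqrt_comp_hasFDerivAt (sw i) (hs i) q
  have snr : ∀ i, ContDiff ℝ (⊤ : ℕ∞)
      (fun q => (‖rho n R₀ n₀ (z i) (scl (jap (p i).2) q)‖ : ℂ)) :=
    fun i => Complex.ofRealCLM.contDiff.comp ((sr i).norm ℝ (hr0 i))
  have hn0 : ∀ i q, (‖rho n R₀ n₀ (z i) (scl (jap (p i).2) q)‖ : ℂ) ≠ 0 := fun i q => by
    simpa using hr0 i q
  have zp : ∀ {f : EuclideanSpace ℝ (Fin n) × EuclideanSpace ℝ (Fin n) → ℂ},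
      ContDiff ℝ (⊤ : ℕ∞) f → (∀ q, f q ≠ 0) → ContDiff ℝ (⊤ : ℕ∞) (fun q => f q ^ k) := by
    intro f hf h0
    rcases k with j | j
    · simpa using hf.pow j
    · simp only [zpow_negSucc]
      exact (hf.pow (j + 1)).inv (fun q => pow_ne_zero _ (h0 q))
  have hKw' : ∀ i, jap (p i).2 ^ 2 ≤
      K * L i * ‖wfun R₀ n₀ (z i) (scl (jap (p i).2) (scpt (p i)))‖ := by
    intro i; rw [scl_scpt]; exact hKw i
  constructor
  · have := UB.power (p := fun i => scpt (p i)) (A := fun i => jap (p i).2 ^ 2) (L := L)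
      (w := fun i q => wfun R₀ n₀ (z i) (scl (jap (p i).2) q))
      (f := fun i q => rho n R₀ n₀ (z i) (scl (jap (p i).2) q) ^ k)
      ((k / 2 : ℂ) • ContinuousLinearMap.id ℝ ℂ) sw hw (fun i => zp (sr i) (hr0 i))
      (fun i q => ?_) (fun _ => by positivity) hL
      (fun m => wfun_UB sR hR sn hnb p z hz m) K hK hKw' m
    · simpa [scl_scpt] using this
    · refine (zpow_hasFDerivAt (hfr i q) (hr0 i q) k).congr_fderiv ?_
      rw [rho_eq]
      congr 1
      refine ContinuousLinearMap.ext fun v => ?_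
      simp
      ring
  · have := UB.power (p := fun i => scpt (p i)) (A := fun i => jap (p i).2 ^ 2) (L := L)
      (w := fun i q => wfun R₀ n₀ (z i) (scl (jap (p i).2) q))
      (f := fun i q => (‖rho n R₀ n₀ (z i) (scl (jap (p i).2) q)‖ : ℂ) ^ k)
      ((k / 2 : ℂ) • (Complex.ofRealCLM.comp Complex.reCLM)) sw hw (fun i => zp (snr i) (hn0 i))
      (fun i q => ?_) (fun _ => by positivity) hL
      (fun m => wfun_UB sR hR sn hnb p z hz m) K hK hKw' m
    · simpa [scl_scpt] using this
    · refine (zpow_hasFDerivAt (norm_hasFDerivAt (hfr i q) (hr0 i q)) (hn0 i q) k).congr_fderiv ?_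
      congr 1
      refine ContinuousLinearMap.ext fun v => ?_
      have : ((1 / 2 : ℂ) * ((wfun R₀ n₀ (z i) (scl (jap (p i).2) q))⁻¹ *
        fderiv ℝ (fun q => wfun R₀ n₀ (z i) (scl (jap (p i).2) q)) q v)).re =
        (1 / 2) * ((wfun R₀ n₀ (z i) (scl (jap (p i).2) q))⁻¹ *
        fderiv ℝ (fun q => wfun R₀ n₀ (z i) (scl (jap (p i).2) q)) q v).re := by
        rw [show (1 / 2 : ℂ) = ((1 / 2 : ℝ) : ℂ) by push_cast; rfl, Complex.re_ofReal_mul]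
      simp only [smul_apply, ContinuousLinearMap.comp_apply, smul_eq_mul,
        Complex.reCLM_apply, Complex.ofRealCLM_apply, this]
      push_cast
      ring

end concrete2


section concrete3

variable {n : ℕ} {ι : Type*}
  {R₀ : EuclideanSpace ℝ (Fin n) → (EuclideanSpace ℝ (Fin n) →L[ℝ] EuclideanSpace ℝ (Fin n))}
  {n₀ : EuclideanSpace ℝ (Fin n) → ℝ}

/-- the argument of the cutoff -/
def ufun (R₀ : EuclideanSpace ℝ (Fin n) → (EuclideanSpace ℝ (Fin n) →L[ℝ] EuclideanSpace ℝ (Fin n)))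
    (n₀ : EuclideanSpace ℝ (Fin n) → ℝ) (δ : ℝ)
    (q : EuclideanSpace ℝ (Fin n) × EuclideanSpace ℝ (Fin n)) : ℝ :=
  (1 - rZero n R₀ q / n₀ q.1) / δ

theorem ufun_contDiff (sR : ContDiff ℝ (⊤ : ℕ∞) R₀) (sn : ContDiff ℝ (⊤ : ℕ∞) n₀)
    (hn : ∀ x, 0 < n₀ x) (δ : ℝ) : ContDiff ℝ (⊤ : ℕ∞) (ufun R₀ n₀ δ) := by
  have h : ContDiff ℝ (⊤ : ℕ∞)
    (fun q : EuclideanSpace ℝ (Fin n) × EuclideanSpace ℝ (Fin n) => n₀ q.1) := sn.comp contDiff_fst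
  exact (contDiff_const.sub ((rZero_contDiff sR).div h (fun q => (hn q.1).ne'))).div_const _

theorem jap_bound {c D δ : ℝ} (hc : 0 < c)
    (hell : ∀ x ξ, c * ‖ξ‖ ^ 2 ≤ (inner ℝ (R₀ x ξ) ξ : ℝ)) (hn : ∀ x, 0 < n₀ x)
    (hD : ∀ x, n₀ x ≤ D) (hδ : 0 < δ) (hδ' : δ < 1 / 2)
    (p : EuclideanSpace ℝ (Fin n) × EuclideanSpace ℝ (Fin n)) (hp : -2 ≤ ufun R₀ n₀ δ p) :
    jap p.2 ^ 2 ≤ 1 + 2 * D / c := by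
  rw [jap_sq]
  have h1 := hell p.1 p.2
  have h2 : rZero n R₀ p = (inner ℝ (R₀ p.1 p.2) p.2 : ℝ) := rfl
  rw [← h2] at h1
  rw [ufun, le_div_iff₀ hδ] at hp
  have h3 : rZero n R₀ p / n₀ p.1 ≤ 2 := by linarith
  rw [div_le_iff₀ (hn p.1)] at h3
  have h4 : ‖p.2‖ ^ 2 ≤ 2 * D / c := by
    rw [le_div_iff₀ hc]
    linarith [hD p.1]
  linarith

theorem chi_UB (sR : ContDiff ℝ (⊤ : ℕ∞) R₀)
    (hR : ∀ m : ℕ, ∃ C : ℝ, ∀ x, ‖iteratedFDeriv ℝ m R₀ x‖ ≤ C)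
    (hell : ∃ c : ℝ, 0 < c ∧ ∀ x ξ, c * ‖ξ‖ ^ 2 ≤ (inner ℝ (R₀ x ξ) ξ : ℝ))
    (sn : ContDiff ℝ (⊤ : ℕ∞) n₀)
    (hnb : ∀ m : ℕ, ∃ C : ℝ, ∀ x, ‖iteratedFDeriv ℝ m n₀ x‖ ≤ C)
    (hnpos : ∃ c : ℝ, 0 < c ∧ ∀ x, c ≤ n₀ x)
    {δ : ℝ} (hδ : 0 < δ) (hδ' : δ < 1 / 2) {ψ : ℝ → ℝ} (sψ : ContDiff ℝ (⊤ : ℕ∞) ψ)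
    (hψ : ∀ m : ℕ, ∃ C : ℝ, ∀ x, ‖iteratedFDeriv ℝ m ψ x‖ ≤ C)
    (hψ2 : ∃ c0 : ℝ, ∀ t, t ≤ -2 → ψ t = c0)
    (p : ι → EuclideanSpace ℝ (Fin n) × EuclideanSpace ℝ (Fin n)) (m : ℕ) :
    UB (fun i q => (ψ (ufun R₀ n₀ δ (scl (jap (p i).2) q)) : ℂ)) (fun i => scpt (p i))
      (fun _ => 1) (fun _ => 1) m := by
  obtain ⟨c, hc, hell⟩ := hell
  obtain ⟨cn, hcn, hnpos⟩ := hnpos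
  obtain ⟨c0, hc0⟩ := hψ2
  have hn : ∀ x, 0 < n₀ x := fun x => hcn.trans_le (hnpos x)
  obtain ⟨D, hD⟩ := hnb 0
  have hD' : ∀ x, n₀ x ≤ D := fun x => by
    have := hD x
    rw [norm_iteratedFDeriv_zero] at this
    exact (le_abs_self _).trans this
  have su := ufun_contDiff sR sn hn δ
  -- near part
  have near : UB (fun (i : {i : ι // -2 ≤ ufun R₀ n₀ δ (p i)}) q =>
      (ψ (ufun R₀ n₀ δ (scl (jap (p i.1).2) q)) : ℂ)) (fun i => scpt (p i.1))
      (fun _ => 1) (fun _ => 1) m := by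
    have z1 : ∀ i : {i : ι // -2 ≤ ufun R₀ n₀ δ (p i)}, (0 : ℝ) ≤ (fun _ => 1) i :=
      fun _ => zero_le_one
    have scpsi : ∀ i : {i : ι // -2 ≤ ufun R₀ n₀ δ (p i)}, ContDiff ℝ (⊤ : ℕ∞) (fun q =>
      (ufun R₀ n₀ δ (scl (jap (p i.1).2) q))) := fun i => su.comp (scl (n := n) _).contDiff
    refine UB.clm Complex.ofRealCLM (UB.comp_real ψ sψ hψ scpsi ?_) (fun i => sψ.comp (scpsi i))
    have snc : ContDiff ℝ (⊤ : ℕ∞)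
      (fun p : EuclideanSpace ℝ (Fin n) × EuclideanSpace ℝ (Fin n) => (n₀ p.1 : ℂ)) :=
      Complex.ofRealCLM.contDiff.comp (sn.comp contDiff_fst)
    have nne : ∀ p : EuclideanSpace ℝ (Fin n) × EuclideanSpace ℝ (Fin n), (n₀ p.1 : ℂ) ≠ 0 :=
      fun p => by exact_mod_cast (hn p.1).ne'
    have i1 := UB.inv (ι := {i : ι // -2 ≤ ufun R₀ n₀ δ (p i)}) (p := fun i => scpt (p i.1))
      (A := fun _ => 1) (L := fun _ => 1) (fun _ => snc) (fun _ => nne) z1 (fun _ => le_rfl)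
      (fun m => UB.clm Complex.ofRealCLM (UB_fst sn hnb _ m) (fun _ => sn.comp contDiff_fst))
      cn⁻¹ (by positivity) (fun i => by
        simp only [mul_one, Complex.norm_real, Real.norm_of_nonneg (hn _).le]
        rw [inv_mul_eq_div, le_div_iff₀ hcn]
        linarith [hnpos (scpt (p i.1)).1]) m
    have sinv : ContDiff ℝ (⊤ : ℕ∞)
      (fun p : EuclideanSpace ℝ (Fin n) × EuclideanSpace ℝ (Fin n) => (n₀ p.1 : ℂ)⁻¹) :=
      snc.inv nne
    have i2 := (UB.clm Complex.reCLM i1 (fun _ => sinv)).mono (A' := fun _ => 1)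
      (L' := fun _ => 1) cn⁻¹ (by positivity)
      (fun i => by
        simp only [mul_one, Complex.norm_real, Real.norm_of_nonneg (hn _).le]
        exact inv_anti₀ hcn (hnpos _)) z1 z1 (by simp)
    have sre : ContDiff ℝ (⊤ : ℕ∞)
      (fun p : EuclideanSpace ℝ (Fin n) × EuclideanSpace ℝ (Fin n) =>
        Complex.reCLM ((n₀ p.1 : ℂ)⁻¹)) := Complex.reCLM.contDiff.comp sinv
    have i3 := (UB.bilin (ContinuousLinearMap.mul ℝ ℝ)
      (rZero_UB sR hR _ (fun i : {i : ι // -2 ≤ ufun R₀ n₀ δ (p i)} => scpt_norm (p i.1)) m) i2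
      (fun _ => rZero_contDiff sR) (fun _ => sre) z1 z1 z1).mono (A' := fun _ => 1)
      (L' := fun _ => 1) 1 zero_le_one (by simp) z1 z1 (by simp)
    have s3 : ContDiff ℝ (⊤ : ℕ∞)
      (fun p : EuclideanSpace ℝ (Fin n) × EuclideanSpace ℝ (Fin n) =>
        rZero n R₀ p * Complex.reCLM ((n₀ p.1 : ℂ)⁻¹)) := (rZero_contDiff sR).mul sre
    have i4 := UB.bilin (ContinuousLinearMap.mul ℝ ℝ)
      (UB.const (p := fun i : {i : ι // -2 ≤ ufun R₀ n₀ δ (p i)} => scpt (p i.1)) (m := m)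
        (L := fun _ => 1) (A := fun _ => 1) (fun i => -jap (p i.1).2 ^ 2 / δ)
        ⟨(1 + 2 * D / c) / δ, fun i => by
          rw [norm_div, norm_neg, Real.norm_of_nonneg hδ.le, Real.norm_of_nonneg (by positivity),
            mul_one]
          exact div_le_div_of_nonneg_right (jap_bound hc hell hn hD' hδ hδ' _ i.2) hδ.le⟩ z1 z1)
      i3 (fun _ => contDiff_const) (fun _ => s3) z1 z1 z1
    have i5 := UB.add (UB.const (p := fun i : {i : ι // -2 ≤ ufun R₀ n₀ δ (p i)} => scpt (p i.1))
        (m := m) (L := fun _ => 1) (A := fun _ => 1) (fun i => 1 / δ)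
        ⟨1 / δ, fun i => by
          rw [Real.norm_of_nonneg (by positivity), mul_one]⟩ z1 z1)
      (i4.mono (A' := fun _ => 1) (L' := fun _ => 1) 1 zero_le_one (by simp) z1 z1 (by simp))
      (fun _ => contDiff_const) (fun _ => contDiff_const.mul s3)
    convert i5 using 1
    ext i q
    have hre : ((n₀ q.1 : ℂ)⁻¹).re = (n₀ q.1)⁻¹ := by
      rw [← Complex.ofReal_inv, Complex.ofReal_re]
    have : n₀ q.1 ≠ 0 := (hn q.1).ne'
    rw [ufun, rZero_scl]
    simp only [scl_apply, ContinuousLinearMap.mul_apply', Complex.reCLM_apply, hre]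
    field_simp
    ring
  obtain ⟨C, hC, near⟩ := near
  refine ⟨C + |c0|, by positivity, fun i j hj => ?_⟩
  simp only [one_pow, mul_one]
  by_cases hi : -2 ≤ ufun R₀ n₀ δ (p i)
  · have := near ⟨i, hi⟩ j hj
    simp only [one_pow, mul_one] at this
    linarith [abs_nonneg c0]
  · push Not at hi
    have hcont : Continuous (fun q => ufun R₀ n₀ δ (scl (jap (p i).2) q)) :=
      su.continuous.comp (scl (n := n) _).continuous
    have ev : (fun q => (ψ (ufun R₀ n₀ δ (scl (jap (p i).2) q)) : ℂ)) =ᶠ[nhds (scpt (p i))]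
        fun _ => (c0 : ℂ) := by
      have : ∀ᶠ q in nhds (scpt (p i)), ufun R₀ n₀ δ (scl (jap (p i).2) q) < -2 :=
        hcont.continuousAt.eventually_lt continuousAt_const (by rw [scl_scpt]; exact hi)
      filter_upwards [this] with q hq
      rw [hc0 _ hq.le]
    rw [(ev.iteratedFDeriv (𝕜 := ℝ) j).eq_of_nhds]
    rcases j with _ | j
    · simp [hC]
    · rw [iteratedFDeriv_const_of_ne (by omega)]
      simp only [Pi.zero_apply, norm_zero]
      positivity

theorem rho_pow_bound (K K2 : ℝ) (k : ℤ) : ∃ C : ℝ, 0 ≤ C ∧ ∀ r l L : ℝ, 0 < r → 0 < l → 1 ≤ L →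
    l ^ 2 ≤ K * L * r ^ 2 → r ^ 2 ≤ K2 * l ^ 2 →
    r ^ k ≤ C * (l ^ k * Real.sqrt L ^ (kminus k).toNat) := by
  by_cases hk : k < 0
  · refine ⟨Real.sqrt K ^ (-k).toNat, by positivity, fun r l L hr hl hL h1 h2 => ?_⟩
    obtain ⟨j, rfl⟩ : ∃ j : ℕ, k = -(j : ℤ) := ⟨(-k).toNat, by omega⟩
    have e : (kminus (-(j : ℤ))).toNat = j := by rw [kminus, if_pos hk]; simp
    rw [e]
    simp only [neg_neg, Int.toNat_natCast, zpow_neg, zpow_natCast]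
    have h3 : l ≤ Real.sqrt K * Real.sqrt L * r := by
      have hK : 0 ≤ K := by
        by_contra hK
        push Not at hK
        have : K * (L * r ^ 2) < 0 := mul_neg_of_neg_of_pos hK (by positivity)
        nlinarith [sq_nonneg l]
      rw [← Real.sqrt_mul hK]
      have h := Real.sqrt_le_sqrt h1
      rwa [Real.sqrt_sq hl.le, Real.sqrt_mul' _ (by positivity), Real.sqrt_sq hr.le] at h
    have h4 : l ^ j ≤ Real.sqrt K ^ j * Real.sqrt L ^ j * r ^ j := by
      rw [← mul_pow, ← mul_pow]
      exact pow_le_pow_left₀ hl.le h3 j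
    have hlj : 0 < l ^ j := by positivity
    have hrj : 0 < r ^ j := by positivity
    rw [inv_eq_one_div, div_le_iff₀ hrj]
    calc (1 : ℝ) = (l ^ j)⁻¹ * l ^ j := (inv_mul_cancel₀ hlj.ne').symm
      _ ≤ (l ^ j)⁻¹ * (Real.sqrt K ^ j * Real.sqrt L ^ j * r ^ j) :=
          mul_le_mul_of_nonneg_left h4 (by positivity)
      _ = _ := by ring
  · refine ⟨Real.sqrt K2 ^ k.toNat, by positivity, fun r l L hr hl hL h1 h2 => ?_⟩
    obtain ⟨j, rfl⟩ : ∃ j : ℕ, k = (j : ℤ) := ⟨k.toNat, by omega⟩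
    have e : (kminus (j : ℤ)).toNat = 0 := by rw [kminus, if_neg hk]; simp
    rw [e]
    simp only [Int.toNat_natCast, zpow_natCast, pow_zero, mul_one]
    rw [← mul_pow]
    refine pow_le_pow_left₀ hr.le ?_ j
    have h3 := Real.sqrt_le_sqrt h2
    rwa [Real.sqrt_sq hr.le, Real.sqrt_mul' _ (by positivity), Real.sqrt_sq hl.le] at h3

theorem wfun_upper (hR : ∀ m : ℕ, ∃ C : ℝ, ∀ x, ‖iteratedFDeriv ℝ m R₀ x‖ ≤ C)
    (hnb : ∀ m : ℕ, ∃ C : ℝ, ∀ x, ‖iteratedFDeriv ℝ m n₀ x‖ ≤ C) :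
    ∃ K2 : ℝ, ∀ z, Zall z → ∀ p, ‖wfun R₀ n₀ z p‖ ≤ K2 * jap p.2 ^ 2 := by
  obtain ⟨D, hD⟩ := hnb 0
  obtain ⟨M, hM⟩ := hR 0
  simp only [norm_iteratedFDeriv_zero] at hD hM
  refine ⟨M + 2 * D, fun z hz p => ?_⟩
  have hM0 : 0 ≤ M := (norm_nonneg _).trans (hM p.1)
  have hD0 : 0 ≤ D := (norm_nonneg _).trans (hD p.1)
  have h1 : |rZero n R₀ p| ≤ M * ‖p.2‖ ^ 2 := by
    refine (abs_real_inner_le_norm _ _).trans ?_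
    have : ‖R₀ p.1 p.2‖ ≤ M * ‖p.2‖ :=
      ((R₀ p.1).le_opNorm p.2).trans (mul_le_mul_of_nonneg_right (hM _) (norm_nonneg _))
    nlinarith [norm_nonneg p.2]
  have h2 : ‖z * (n₀ p.1 : ℂ)‖ ≤ 2 * D := by
    rw [norm_mul, Complex.norm_real]
    exact mul_le_mul (Zall_norm hz) (hD _) (norm_nonneg _) (by norm_num)
  have h3 : ‖wfun R₀ n₀ z p‖ ≤ |rZero n R₀ p| + 2 * D := by
    rw [wfun]
    refine (norm_add_le _ _).trans ?_
    rw [norm_neg, Complex.norm_real]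
    exact add_le_add le_rfl h2
  rw [jap_sq]
  have h4 : 0 ≤ D * ‖p.2‖ ^ 2 := by positivity
  nlinarith

end concrete3


section final

variable {n : ℕ}
  {R₀ : EuclideanSpace ℝ (Fin n) → (EuclideanSpace ℝ (Fin n) →L[ℝ] EuclideanSpace ℝ (Fin n))}
  {n₀ : EuclideanSpace ℝ (Fin n) → ℝ}

theorem zpow_contDiff {f : EuclideanSpace ℝ (Fin n) × EuclideanSpace ℝ (Fin n) → ℂ}
    (hf : ContDiff ℝ (⊤ : ℕ∞) f) (h0 : ∀ q, f q ≠ 0) (k : ℤ) :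
    ContDiff ℝ (⊤ : ℕ∞) (fun q => f q ^ k) := by
  rcases k with j | j
  · simpa using hf.pow j
  · simp only [zpow_negSucc]
    exact (hf.pow (j + 1)).inv (fun q => pow_ne_zero _ (h0 q))

theorem rho_ne (hr : ∀ p, 0 ≤ rZero n R₀ p) (hn : ∀ x, 0 < n₀ x) {z : ℂ} (hz : Zall z) (p) :
    rho n R₀ n₀ z p ≠ 0 := fun h => by
  have := rho_norm_sq (R₀ := R₀) (n₀ := n₀) z p
  rw [h] at this
  simp at this
  have h2 := Complex.slitPlane_ne_zero (wfun_slit hr hn hz p)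
  simp [norm_eq_zero.1 this.symm] at h2

theorem rho_pow_contDiff (sR : ContDiff ℝ (⊤ : ℕ∞) R₀) (sn : ContDiff ℝ (⊤ : ℕ∞) n₀)
    (hr : ∀ p, 0 ≤ rZero n R₀ p) (hn : ∀ x, 0 < n₀ x) {z : ℂ} (hz : Zall z) (k : ℤ) :
    ContDiff ℝ (⊤ : ℕ∞) (fun q => rho n R₀ n₀ z q ^ k) ∧
    ContDiff ℝ (⊤ : ℕ∞) (fun q => (‖rho n R₀ n₀ z q‖ : ℂ) ^ k) := by
  have sr : ContDiff ℝ (⊤ : ℕ∞) (fun q => rho n R₀ n₀ z q) :=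
    ssqrt_comp_contDiff (wfun_contDiff sR sn z) (wfun_slit hr hn hz)
  have h0 : ∀ q, rho n R₀ n₀ z q ≠ 0 := rho_ne hr hn hz
  refine ⟨zpow_contDiff sr h0 k, zpow_contDiff
    (Complex.ofRealCLM.contDiff.comp (sr.norm ℝ h0)) (fun q => ?_) k⟩
  simpa using h0 q

theorem jap_continuous : Continuous
    (fun p : EuclideanSpace ℝ (Fin n) × EuclideanSpace ℝ (Fin n) => jap p.2) := by
  unfold jap
  fun_prop

theorem full_bound (sR : ContDiff ℝ (⊤ : ℕ∞) R₀)
    (hR : ∀ m : ℕ, ∃ C : ℝ, ∀ x, ‖iteratedFDeriv ℝ m R₀ x‖ ≤ C)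
    (hell : ∃ c : ℝ, 0 < c ∧ ∀ x ξ, c * ‖ξ‖ ^ 2 ≤ (inner ℝ (R₀ x ξ) ξ : ℝ))
    (sn : ContDiff ℝ (⊤ : ℕ∞) n₀)
    (hnb : ∀ m : ℕ, ∃ C : ℝ, ∀ x, ‖iteratedFDeriv ℝ m n₀ x‖ ≤ C)
    (hnpos : ∃ c : ℝ, 0 < c ∧ ∀ x, c ≤ n₀ x)
    {δ : ℝ} (hδ : 0 < δ) (hδ' : δ < 1 / 2) {ψ : ℝ → ℝ} (sψ : ContDiff ℝ (⊤ : ℕ∞) ψ)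
    (hψ : ∀ m : ℕ, ∃ C : ℝ, ∀ x, ‖iteratedFDeriv ℝ m ψ x‖ ≤ C)
    (hψ2 : ∃ c0 : ℝ, ∀ t, t ≤ -2 → ψ t = c0)
    (Q : ℂ → Prop) (hQ : ∀ z, Q z → Zall z) (lam : ℂ → ℝ) (hlam : ∀ z, Q z → 1 ≤ lam z)
    (K : ℝ) (hK : 0 ≤ K)
    (hlow : ∀ z, Q z → ∀ p, ψ (ufun R₀ n₀ δ p) ≠ 0 →
      jap p.2 ^ 2 ≤ K * lam z * ‖wfun R₀ n₀ z p‖)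
    (k : ℤ) (α β : ℕ) :
    ∃ C : ℝ, 0 ≤ C ∧ ∀ z, Q z →
        ∀ (v : Fin α → EuclideanSpace ℝ (Fin n)) (w : Fin β → EuclideanSpace ℝ (Fin n)),
          (∀ i, ‖v i‖ ≤ 1) → (∀ i, ‖w i‖ ≤ 1) → ∀ p,
      (p ∈ closure {q | ψ (ufun R₀ n₀ δ q) ≠ 0} ∧
        ‖Dmix n (fun q => (ψ (ufun R₀ n₀ δ q) : ℂ) * rho n R₀ n₀ z q ^ k) α β v w p‖ ≤
          C * (jap p.2 ^ k * Real.sqrt (lam z) ^ (kminus k).toNat) * lam z ^ (α + β) *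
            ((jap p.2)⁻¹) ^ β ∧
        ‖Dmix n (fun q => (ψ (ufun R₀ n₀ δ q) : ℂ) * (‖rho n R₀ n₀ z q‖ : ℂ) ^ k) α β v w p‖ ≤
          C * (jap p.2 ^ k * Real.sqrt (lam z) ^ (kminus k).toNat) * lam z ^ (α + β) *
            ((jap p.2)⁻¹) ^ β) ∨
      (Dmix n (fun q => (ψ (ufun R₀ n₀ δ q) : ℂ) * rho n R₀ n₀ z q ^ k) α β v w p = 0 ∧
       Dmix n (fun q => (ψ (ufun R₀ n₀ δ q) : ℂ) * (‖rho n R₀ n₀ z q‖ : ℂ) ^ k) α β v w p = 0) := by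
  have hn : ∀ x, 0 < n₀ x := by
    obtain ⟨c, hc, h⟩ := hnpos
    exact fun x => hc.trans_le (h x)
  have hr : ∀ p, 0 ≤ rZero n R₀ p := by
    obtain ⟨c, hc, h⟩ := hell
    intro p
    have := h p.1 p.2
    exact le_trans (by positivity) this
  have su := ufun_contDiff sR sn hn δ
  have sχ : ContDiff ℝ (⊤ : ℕ∞) (fun q => (ψ (ufun R₀ n₀ δ q) : ℂ)) :=
    Complex.ofRealCLM.contDiff.comp (sψ.comp su)
  have hlow' : ∀ z, Q z → ∀ p ∈ closure {q | ψ (ufun R₀ n₀ δ q) ≠ 0},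
      jap p.2 ^ 2 ≤ K * lam z * ‖wfun R₀ n₀ z p‖ := by
    intro z hz
    have hcl : IsClosed {p : EuclideanSpace ℝ (Fin n) × EuclideanSpace ℝ (Fin n) |
        jap p.2 ^ 2 ≤ K * lam z * ‖wfun R₀ n₀ z p‖} :=
      isClosed_le (jap_continuous.pow 2)
        (continuous_const.mul (wfun_contDiff sR sn z).continuous.norm)
    exact fun p hp => closure_minimal (fun q hq => hlow z hz q hq) hcl hp
  let I := {x : ℂ × (EuclideanSpace ℝ (Fin n) × EuclideanSpace ℝ (Fin n)) //
    Q x.1 ∧ x.2 ∈ closure {q | ψ (ufun R₀ n₀ δ q) ≠ 0}}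
  let P : I → EuclideanSpace ℝ (Fin n) × EuclideanSpace ℝ (Fin n) := fun i => i.1.2
  let Z : I → ℂ := fun i => i.1.1
  have hL1 : ∀ i : I, 1 ≤ lam (Z i) := fun i => hlam _ i.2.1
  have hL0 : ∀ i : I, 0 ≤ lam (Z i) := fun i => zero_le_one.trans (hL1 i)
  have uχ := (chi_UB sR hR hell sn hnb hnpos hδ hδ' sψ hψ hψ2 P (α + β)).mono
    (A' := fun _ => 1) (L' := fun i => lam (Z i)) 1 zero_le_one (by simp)
    (fun _ => zero_le_one) (fun _ => zero_le_one) hL1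
  obtain ⟨u1, u2⟩ := rho_UB sR hR sn hnb hr hn P Z (fun i => hQ _ i.2.1) (fun i => lam (Z i)) hL1
    K hK (fun i => hlow' _ i.2.1 _ i.2.2) k (α + β)
  have sχ' : ∀ i : I, ContDiff ℝ (⊤ : ℕ∞)
      (fun q => (ψ (ufun R₀ n₀ δ (scl (jap (P i).2) q)) : ℂ)) :=
    fun i => sχ.comp (scl (n := n) _).contDiff
  have m1 := UB.mul uχ u1 sχ' (fun i => ((rho_pow_contDiff sR sn hr hn (hQ _ i.2.1) k).1).comp
    (scl (n := n) _).contDiff) (fun _ => zero_le_one) (fun _ => by positivity) hL0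
  have m2 := UB.mul uχ u2 sχ' (fun i => ((rho_pow_contDiff sR sn hr hn (hQ _ i.2.1) k).2).comp
    (scl (n := n) _).contDiff) (fun _ => zero_le_one) (fun _ => by positivity) hL0
  obtain ⟨C1, hC1, m1⟩ := m1
  obtain ⟨C2, hC2, m2⟩ := m2
  obtain ⟨K2, hK2⟩ := wfun_upper hR hnb
  obtain ⟨C3, hC3, hb⟩ := rho_pow_bound K K2 k
  refine ⟨(C1 + C2) * C3, by positivity, fun z hz v w hv hw p => ?_⟩
  by_cases hp : p ∈ closure {q | ψ (ufun R₀ n₀ δ q) ≠ 0}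
  · left
    have hj := jap_pos p.2
    have hl1 := hlam z hz
    have hl0 : 0 ≤ lam z := zero_le_one.trans hl1
    have hrb : ‖rho n R₀ n₀ z p‖ ^ k ≤
        C3 * (jap p.2 ^ k * Real.sqrt (lam z) ^ (kminus k).toNat) := by
      refine hb _ _ _ (norm_pos_iff.2 (rho_ne hr hn (hQ z hz) p)) hj hl1 ?_ ?_
      · rw [rho_norm_sq]; exact hlow' z hz p hp
      · rw [rho_norm_sq]; exact hK2 z (hQ z hz) p
    have fin : ∀ (x Ci : ℝ), 0 ≤ Ci → Ci ≤ C1 + C2 →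
        x ≤ Ci * (1 * ‖rho n R₀ n₀ z p‖ ^ k) * lam z ^ (α + β) →
        x * ((jap p.2)⁻¹) ^ β ≤ (C1 + C2) * C3 *
          (jap p.2 ^ k * Real.sqrt (lam z) ^ (kminus k).toNat) * lam z ^ (α + β) *
            ((jap p.2)⁻¹) ^ β := by
      intro x Ci hCi hCi' hx
      refine mul_le_mul_of_nonneg_right (hx.trans ?_) (by positivity)
      refine mul_le_mul_of_nonneg_right ?_ (by positivity)
      rw [one_mul, mul_assoc]
      exact mul_le_mul hCi' hrb (by positivity) (by positivity)
    refine ⟨hp, ?_, ?_⟩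
    · refine (Dmix_le (sχ.mul (rho_pow_contDiff sR sn hr hn (hQ z hz) k).1) α β v w hv hw p).trans ?_
      exact fin _ C1 hC1 (by linarith) (m1 ⟨(z, p), hz, hp⟩ (α + β) le_rfl)
    · refine (Dmix_le (sχ.mul (rho_pow_contDiff sR sn hr hn (hQ z hz) k).2) α β v w hv hw p).trans ?_
      exact fin _ C2 hC2 (by linarith) (m2 ⟨(z, p), hz, hp⟩ (α + β) le_rfl)
  · right
    have ev : ∀ᶠ q in nhds p, ψ (ufun R₀ n₀ δ q) = 0 := by
      filter_upwards [isClosed_closure.isOpen_compl.mem_nhds hp] with q hq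
      by_contra h
      exact hq (subset_closure h)
    constructor
    · refine Dmix_zero α β v w p ?_
      filter_upwards [ev] with q hq
      simp [hq]
    · refine Dmix_zero α β v w p ?_
      filter_upwards [ev] with q hq
      simp [hq]

theorem low_one (hell : ∃ c : ℝ, 0 < c ∧ ∀ x ξ, c * ‖ξ‖ ^ 2 ≤ (inner ℝ (R₀ x ξ) ξ : ℝ))
    (hnb : ∀ m : ℕ, ∃ C : ℝ, ∀ x, ‖iteratedFDeriv ℝ m n₀ x‖ ≤ C) {c₁ : ℝ} (hc₁ : 0 < c₁) :
    ∃ K : ℝ, 0 ≤ K ∧ ∀ z, Zall z → ∀ p, c₁ ≤ ‖rho n R₀ n₀ z p‖ →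
      jap p.2 ^ 2 ≤ K * 1 * ‖wfun R₀ n₀ z p‖ := by
  obtain ⟨c, hc, hell⟩ := hell
  obtain ⟨D, hD⟩ := hnb 0
  simp only [norm_iteratedFDeriv_zero] at hD
  have hD0 : 0 ≤ D := (norm_nonneg _).trans (hD 0)
  refine ⟨1 / c₁ ^ 2 + (1 + 2 * D / c₁ ^ 2) / c, by positivity, fun z hz p hp => ?_⟩
  have h1 : c₁ ^ 2 ≤ ‖wfun R₀ n₀ z p‖ := by
    rw [← rho_norm_sq]
    exact pow_le_pow_left₀ hc₁.le hp 2
  have h2 : ‖z * (n₀ p.1 : ℂ)‖ ≤ 2 * D := by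
    rw [norm_mul, Complex.norm_real]
    exact mul_le_mul (Zall_norm hz) (hD _) (norm_nonneg _) (by norm_num)
  have h3 : |rZero n R₀ p| ≤ ‖wfun R₀ n₀ z p‖ + 2 * D := by
    have e : (rZero n R₀ p : ℂ) = z * (n₀ p.1 : ℂ) - wfun R₀ n₀ z p := by rw [wfun]; ring
    have h := norm_sub_le (z * (n₀ p.1 : ℂ)) (wfun R₀ n₀ z p)
    rw [← e, Complex.norm_real, Real.norm_eq_abs] at h
    linarith
  have h4 : c * ‖p.2‖ ^ 2 ≤ |rZero n R₀ p| := (hell p.1 p.2).trans (le_abs_self _)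
  have h5 : 1 ≤ 1 / c₁ ^ 2 * ‖wfun R₀ n₀ z p‖ := by
    rw [one_div, inv_mul_eq_div, le_div_iff₀ (by positivity)]
    linarith
  have h6 : ‖p.2‖ ^ 2 ≤ (1 + 2 * D / c₁ ^ 2) / c * ‖wfun R₀ n₀ z p‖ := by
    rw [div_mul_eq_mul_div, le_div_iff₀ hc]
    have : 2 * D ≤ 2 * D * (1 / c₁ ^ 2 * ‖wfun R₀ n₀ z p‖) := le_mul_of_one_le_right (by positivity) h5
    have e : (1 + 2 * D / c₁ ^ 2) * ‖wfun R₀ n₀ z p‖ =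
      ‖wfun R₀ n₀ z p‖ + 2 * D * (1 / c₁ ^ 2 * ‖wfun R₀ n₀ z p‖) := by ring
    linarith
  rw [jap_sq, mul_one, add_mul]
  linarith

theorem phi_bdd {φ : ℝ → ℝ} (sφ : ContDiff ℝ (⊤ : ℕ∞) φ) (h0 : ∀ t, 2 ≤ |t| → φ t = 0) (m : ℕ) :
    ∃ C : ℝ, ∀ x, ‖iteratedFDeriv ℝ m φ x‖ ≤ C := by
  have hc : HasCompactSupport φ := by
    refine HasCompactSupport.intro (isCompact_Icc (a := (-2 : ℝ)) (b := 2)) fun t ht => h0 t ?_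
    by_contra h
    push Not at h
    exact ht ⟨(abs_lt.1 h).1.le, (abs_lt.1 h).2.le⟩
  exact (hc.iteratedFDeriv (𝕜 := ℝ) m).exists_bound_of_continuous
    (sφ.continuous_iteratedFDeriv (by exact_mod_cast le_top))

theorem one_sub_bdd {φ : ℝ → ℝ} (sφ : ContDiff ℝ (⊤ : ℕ∞) φ)
    (h : ∀ m : ℕ, ∃ C : ℝ, ∀ x, ‖iteratedFDeriv ℝ m φ x‖ ≤ C) (m : ℕ) :
    ∃ C : ℝ, ∀ x, ‖iteratedFDeriv ℝ m (fun t => 1 - φ t) x‖ ≤ C := by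
  obtain ⟨C, hC⟩ := h m
  have h1 : UB (fun (_ : ℝ) (t : ℝ) => φ t) (fun x => x) (fun _ => 1) (fun _ => 1) m := by
    choose D hD using h
    refine ⟨∑ j ∈ Finset.range (m + 1), |D j|, Finset.sum_nonneg fun _ _ => abs_nonneg _,
      fun x j hj => ?_⟩
    simp only [mul_one, one_pow]
    refine (hD j x).trans ((le_abs_self _).trans ?_)
    exact Finset.single_le_sum (f := fun j => |D j|) (fun _ _ => abs_nonneg _)
      (Finset.mem_range.2 (by omega))
  obtain ⟨C, _, h2⟩ := UB.add (UB.const (p := fun x : ℝ => x) (m := m) (L := fun _ => 1)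
    (A := fun _ => 1) (fun _ : ℝ => (1 : ℝ)) ⟨1, by simp⟩ (fun _ => zero_le_one)
    (fun _ => zero_le_one)) (UB.clm (-(ContinuousLinearMap.id ℝ ℝ)) h1 (fun _ => sφ))
    (fun _ => contDiff_const) (fun _ => sφ.neg)
  refine ⟨C, fun x => ?_⟩
  have := h2 x m le_rfl
  simpa [sub_eq_add_neg] using this

/-- powers of the bracket as a real power -/
theorem jap_pow_eq {l : ℝ} (hl : 1 ≤ l) (k : ℤ) (β : ℕ) :
    l ^ k * (l⁻¹) ^ β = l ^ ((k : ℝ) - β) := by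
  have h0 : 0 < l := by linarith
  rw [Real.rpow_sub h0, Real.rpow_intCast, Real.rpow_natCast, inv_pow, div_eq_mul_inv]

/-- comparing powers of the bracket on a bounded set of covectors -/
theorem jap_pow_bdd (M : ℝ) (k : ℤ) (N : ℕ) : ∃ C : ℝ, 0 ≤ C ∧ ∀ l : ℝ, 1 ≤ l → l ^ 2 ≤ M →
    ∀ β : ℕ, l ^ k * (l⁻¹) ^ β ≤ C * l ^ (-(N : ℝ) - β) := by
  refine ⟨|M| ^ (k.natAbs + N), by positivity, fun l hl hM β => ?_⟩
  have h0 : 0 < l := by linarith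
  rw [jap_pow_eq hl]
  have e : (k : ℝ) - β = ((k : ℝ) + N) + (-(N : ℝ) - β) := by ring
  rw [e, Real.rpow_add h0]
  refine mul_le_mul_of_nonneg_right ?_ (by positivity)
  have h1 : l ≤ |M| := by
    have := le_abs_self M
    nlinarith
  have h2 : (k : ℝ) ≤ (k.natAbs : ℝ) := by
    rw [Nat.cast_natAbs]
    exact_mod_cast le_abs_self k
  calc l ^ ((k : ℝ) + N) ≤ l ^ (((k.natAbs + N : ℕ) : ℝ)) := by
        refine Real.rpow_le_rpow_of_exponent_le hl ?_
        push_cast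
        linarith
    _ = l ^ (k.natAbs + N) := Real.rpow_natCast _ _
    _ ≤ _ := pow_le_pow_left₀ h0.le h1 _

/-- the powers of `h` -/
theorem h_bound {h ε μ : ℝ} (hh : 0 < h) (hh1 : h ≤ 1) (he : 0 < ε) (he' : ε < 1 / 2)
    (hμ : h ^ (1 / 2 - ε) ≤ μ) (k : ℤ) (j : ℕ) :
    h ^ ((kminus k : ℝ) / 4) * (Real.sqrt μ⁻¹ ^ (kminus k).toNat * μ⁻¹ ^ j) ≤
      h ^ (-(1 / 2 - ε) * (j : ℝ)) := by
  have hs : 0 < h ^ (1 / 2 - ε) := Real.rpow_pos_of_pos hh _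
  have hμ0 : 0 < μ := hs.trans_le hμ
  have h1 : μ⁻¹ ≤ h ^ (-(1 / 2 - ε)) := by
    rw [Real.rpow_neg hh.le]
    exact inv_anti₀ hs hμ
  have h2 : μ⁻¹ ^ j ≤ h ^ (-(1 / 2 - ε) * (j : ℝ)) := by
    rw [Real.rpow_mul hh.le, Real.rpow_natCast]
    exact pow_le_pow_left₀ (by positivity) h1 j
  obtain ⟨i, hi⟩ : ∃ i : ℕ, kminus k = i := by
    unfold kminus
    split_ifs with hk
    · exact ⟨(-k).toNat, by omega⟩
    · exact ⟨0, rfl⟩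
  rw [hi, Int.toNat_natCast, ← mul_assoc]
  have h3 : Real.sqrt μ⁻¹ ≤ h ^ (-(1 / 4) : ℝ) := by
    have : Real.sqrt μ⁻¹ ≤ Real.sqrt (h ^ (-(1 / 2) : ℝ)) := by
      refine Real.sqrt_le_sqrt (h1.trans ?_)
      exact Real.rpow_le_rpow_of_exponent_ge hh hh1 (by linarith)
    refine this.trans (le_of_eq ?_)
    rw [Real.sqrt_eq_rpow, ← Real.rpow_mul hh.le]
    norm_num
  have h4 : h ^ ((((i : ℕ) : ℤ) : ℝ) / 4) * Real.sqrt μ⁻¹ ^ i ≤ 1 := by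
    calc h ^ ((((i : ℕ) : ℤ) : ℝ) / 4) * Real.sqrt μ⁻¹ ^ i
        ≤ h ^ ((((i : ℕ) : ℤ) : ℝ) / 4) * (h ^ (-(1 / 4) : ℝ)) ^ i := by gcongr
      _ = 1 := by
        rw [← Real.rpow_natCast, ← Real.rpow_mul hh.le, ← Real.rpow_add hh]
        push_cast
        rw [show (i : ℝ) / 4 + -(1 / 4) * (i : ℝ) = 0 by ring, Real.rpow_zero]
  calc _ ≤ 1 * h ^ (-(1 / 2 - ε) * (j : ℝ)) :=
        mul_le_mul h4 h2 (by positivity) zero_le_one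
    _ = _ := one_mul _

end final

/-- **Formulas (3.5), (3.6), (3.7).** For every integer `k` and every `N ≥ 0`:
(i) `(1−χ)ρ^k, (1−χ)|ρ|^k ∈ 𝒮_0^k` uniformly for `z ∈ Z₁ ∪ Z₂ ∪ Z₃`;
(ii) `h^{k₋/4} χρ^k, h^{k₋/4} χ|ρ|^k ∈ 𝒮_{1/2−ε}^{−N}` for `z ∈ Z₁(1/2−ε)`;
(iii) `χρ^k, χ|ρ|^k ∈ 𝒮_0^{−N}` for `z ∈ Z₂ ∪ Z₃`.
Here `χ = φ₀((1−r₀/n₀)/δ₁)` is the glancing cutoff, with `0 < δ₁ ≪ 1` fixed. -/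
theorem statement_8 (n : ℕ) (hn : 0 < n)
    (R₀ : EuclideanSpace ℝ (Fin n) → (EuclideanSpace ℝ (Fin n) →L[ℝ] EuclideanSpace ℝ (Fin n)))
    (hR₀smooth : ContDiff ℝ (⊤ : ℕ∞) R₀)
    (hR₀bdd : ∀ m : ℕ, ∃ C : ℝ, ∀ x, ‖iteratedFDeriv ℝ m R₀ x‖ ≤ C)
    (hR₀sym : ∀ x ξ ζ, (inner ℝ (R₀ x ξ) ζ : ℝ) = (inner ℝ ξ (R₀ x ζ) : ℝ))
    (hR₀ell : ∃ c : ℝ, 0 < c ∧ ∀ x ξ, c * ‖ξ‖ ^ 2 ≤ (inner ℝ (R₀ x ξ) ξ : ℝ))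
    (n₀ : EuclideanSpace ℝ (Fin n) → ℝ) (hn₀smooth : ContDiff ℝ (⊤ : ℕ∞) n₀)
    (hn₀bdd : ∀ m : ℕ, ∃ C : ℝ, ∀ x, ‖iteratedFDeriv ℝ m n₀ x‖ ≤ C)
    (hn₀pos : ∃ c : ℝ, 0 < c ∧ ∀ x, c ≤ n₀ x)
    (φ₀ : ℝ → ℝ) (hφ₀ : ContDiff ℝ (⊤ : ℕ∞) φ₀) (hφ₀range : ∀ t, φ₀ t ∈ Set.Icc (0 : ℝ) 1)
    (hφ₀one : ∀ t, |t| ≤ 1 → φ₀ t = 1) (hφ₀zero : ∀ t, 2 ≤ |t| → φ₀ t = 0)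
    (δ₁ : ℝ) (hδ₁ : 0 < δ₁) (hδ₁' : δ₁ < 1 / 2)
    -- |ρ| ≥ C √|Im z| for z ∈ Z₁ on supp χ, and |ρ| ≥ C > 0 for z ∈ Z₂ ∪ Z₃, or for
    -- z ∈ Z₁ on supp (1−χ)  (Lemma 3.1 of [V1]; valid since δ₁ is small)
    (hχlow : ∃ c : ℝ, 0 < c ∧ ∀ z, Zone z → ∀ p,
      φ₀ ((1 - rZero n R₀ p / n₀ p.1) / δ₁) ≠ 0 →
      c * Real.sqrt |z.im| ≤ ‖rho n R₀ n₀ z p‖)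
    (hρlow : ∃ c : ℝ, 0 < c ∧ ∀ z p,
      (Ztwothree z ∨ (Zone z ∧ φ₀ ((1 - rZero n R₀ p / n₀ p.1) / δ₁) ≠ 1)) →
      c ≤ ‖rho n R₀ n₀ z p‖) :
    ∀ k : ℤ, ∀ N : ℕ,
      -- (i)  (1−χ)ρ^k, (1−χ)|ρ|^k ∈ 𝒮_0^k uniformly in z ∈ Z₁ ∪ Z₂ ∪ Z₃
      (∀ α β : ℕ, ∃ C : ℝ, ∀ z, Zall z →
        ∀ (v : Fin α → EuclideanSpace ℝ (Fin n)) (w : Fin β → EuclideanSpace ℝ (Fin n)),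
          (∀ i, ‖v i‖ ≤ 1) → (∀ i, ‖w i‖ ≤ 1) → ∀ p,
          ‖Dmix n (fun q => (1 - φ₀ ((1 - rZero n R₀ q / n₀ q.1) / δ₁)) *
              rho n R₀ n₀ z q ^ k) α β v w p‖ ≤ C * jap p.2 ^ ((k : ℝ) - β) ∧
          ‖Dmix n (fun q => (1 - φ₀ ((1 - rZero n R₀ q / n₀ q.1) / δ₁)) *
              ((‖rho n R₀ n₀ z q‖ : ℂ) ^ k)) α β v w p‖ ≤ C * jap p.2 ^ ((k : ℝ) - β)) ∧
      -- (ii)  h^{k₋/4} χρ^k, h^{k₋/4} χ|ρ|^k ∈ 𝒮_{1/2−ε}^{−N} for z ∈ Z₁(1/2−ε)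
      (∀ ε : ℝ, 0 < ε → ε < 1 / 2 →
        ∀ α β : ℕ, ∃ C : ℝ, ∀ h ∈ Set.Ioc (0 : ℝ) 1, ∀ z, ZoneEps h (1 / 2 - ε) z →
        ∀ (v : Fin α → EuclideanSpace ℝ (Fin n)) (w : Fin β → EuclideanSpace ℝ (Fin n)),
          (∀ i, ‖v i‖ ≤ 1) → (∀ i, ‖w i‖ ≤ 1) → ∀ p,
          h ^ ((kminus k : ℝ) / 4) *
            ‖Dmix n (fun q => φ₀ ((1 - rZero n R₀ q / n₀ q.1) / δ₁) *
                rho n R₀ n₀ z q ^ k) α β v w p‖ ≤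
              C * h ^ (-(1 / 2 - ε) * ((α : ℝ) + β)) * jap p.2 ^ (-(N : ℝ) - β) ∧
          h ^ ((kminus k : ℝ) / 4) *
            ‖Dmix n (fun q => φ₀ ((1 - rZero n R₀ q / n₀ q.1) / δ₁) *
                ((‖rho n R₀ n₀ z q‖ : ℂ) ^ k)) α β v w p‖ ≤
              C * h ^ (-(1 / 2 - ε) * ((α : ℝ) + β)) * jap p.2 ^ (-(N : ℝ) - β)) ∧
      -- (iii)  χρ^k, χ|ρ|^k ∈ 𝒮_0^{−N} for z ∈ Z₂ ∪ Z₃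
      (∀ α β : ℕ, ∃ C : ℝ, ∀ z, Ztwothree z →
        ∀ (v : Fin α → EuclideanSpace ℝ (Fin n)) (w : Fin β → EuclideanSpace ℝ (Fin n)),
          (∀ i, ‖v i‖ ≤ 1) → (∀ i, ‖w i‖ ≤ 1) → ∀ p,
          ‖Dmix n (fun q => φ₀ ((1 - rZero n R₀ q / n₀ q.1) / δ₁) *
              rho n R₀ n₀ z q ^ k) α β v w p‖ ≤ C * jap p.2 ^ (-(N : ℝ) - β) ∧
          ‖Dmix n (fun q => φ₀ ((1 - rZero n R₀ q / n₀ q.1) / δ₁) *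
              ((‖rho n R₀ n₀ z q‖ : ℂ) ^ k)) α β v w p‖ ≤
            C * jap p.2 ^ (-(N : ℝ) - β)) := by
  intro k N
  obtain ⟨cn, hcn, hcn'⟩ := hn₀pos
  have hn0 : ∀ x, 0 < n₀ x := fun x => hcn.trans_le (hcn' x)
  have hnpos : ∃ c : ℝ, 0 < c ∧ ∀ x, c ≤ n₀ x := ⟨cn, hcn, hcn'⟩
  have hφb : ∀ m : ℕ, ∃ C : ℝ, ∀ x, ‖iteratedFDeriv ℝ m φ₀ x‖ ≤ C := phi_bdd hφ₀ hφ₀zero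
  have hφ2 : ∀ t : ℝ, t ≤ -2 → φ₀ t = 0 := fun t ht =>
    hφ₀zero t (by rw [abs_of_nonpos (by linarith)]; linarith)
  have hZ23 : ∀ z, Ztwothree z → Zall z := fun z hz => Or.inr hz
  have hZ1 : ∀ z, Zone z → Zall z := fun z hz => Or.inl hz
  -- bound for the bracket on the support of the cutoff
  obtain ⟨M, hM⟩ : ∃ M : ℝ, ∀ p ∈ closure {q | φ₀ (ufun R₀ n₀ δ₁ q) ≠ 0}, jap p.2 ^ 2 ≤ M := by
    obtain ⟨c, hc, hell⟩ := hR₀ell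
    obtain ⟨D, hD⟩ := hn₀bdd 0
    have hD' : ∀ x, n₀ x ≤ D := fun x => by
      have := hD x
      rw [norm_iteratedFDeriv_zero] at this
      exact (le_abs_self _).trans this
    refine ⟨1 + 2 * D / c, fun p hp => jap_bound hc hell hn0 hD' hδ₁ hδ₁' p ?_⟩
    have hcl : IsClosed {q | -2 ≤ ufun R₀ n₀ δ₁ q} :=
      isClosed_le continuous_const (ufun_contDiff hR₀smooth hn₀smooth hn0 δ₁).continuous
    refine closure_minimal (fun q hq => ?_) hcl hp
    by_contra h
    simp only [Set.mem_setOf_eq, not_le] at h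
    exact hq (hφ2 _ h.le)
  obtain ⟨C0, hC0, hC0'⟩ := jap_pow_bdd M k N
  obtain ⟨c₁, hc₁, hρlow⟩ := hρlow
  obtain ⟨K1, hK1, hlow1⟩ := low_one (R₀ := R₀) hR₀ell hn₀bdd hc₁
  refine ⟨fun α β => ?_, fun ε he he' α β => ?_, fun α β => ?_⟩
  · obtain ⟨C, hC, hb⟩ := full_bound hR₀smooth hR₀bdd hR₀ell hn₀smooth hn₀bdd hnpos hδ₁ hδ₁'
      (ψ := fun t => 1 - φ₀ t) (contDiff_const.sub hφ₀) (one_sub_bdd hφ₀ hφb)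
      ⟨1, fun t ht => by simp [hφ2 t ht]⟩ Zall (fun _ h => h) (fun _ => 1) (fun _ _ => le_rfl)
      K1 hK1 (fun z hz p hp => hlow1 z hz p (hρlow z p (by
        rcases hz with hz | hz
        · exact Or.inr ⟨hz, fun h => hp (sub_eq_zero.2 h.symm)⟩
        · exact Or.inl hz))) k α β
    refine ⟨C, fun z hz v w hv hw p => ?_⟩
    have hj := jap_pos p.2
    have key := hb z hz v w hv hw p
    simp only [Complex.ofReal_sub, Complex.ofReal_one, Real.sqrt_one, one_pow, mul_one, mul_assoc,
      jap_pow_eq (jap_one_le p.2)] at key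
    rcases key with ⟨_, k1, k2⟩ | ⟨k1, k2⟩
    · exact ⟨k1, k2⟩
    · have hpos : 0 ≤ C * jap p.2 ^ ((k : ℝ) - β) := by positivity
      exact ⟨(norm_eq_zero.2 k1).trans_le hpos, (norm_eq_zero.2 k2).trans_le hpos⟩
  · obtain ⟨c, hc, hχlow⟩ := hχlow
    obtain ⟨C, hC, hb⟩ := full_bound hR₀smooth hR₀bdd hR₀ell hn₀smooth hn₀bdd hnpos hδ₁ hδ₁'
      hφ₀ hφb ⟨0, hφ2⟩ Zone hZ1 (fun z => |z.im|⁻¹)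
      (fun z hz => (one_le_inv₀ hz.2.1).2 hz.2.2) (|M| / c ^ 2) (by positivity)
      (fun z hz p hp => by
        have h1 := hM p (subset_closure hp)
        have h2 := hχlow z hz p hp
        have h3 := pow_le_pow_left₀ (by positivity) h2 2
        rw [rho_norm_sq, mul_pow, Real.sq_sqrt (abs_nonneg _)] at h3
        have hz0 := hz.2.1
        refine h1.trans ((le_abs_self M).trans ?_)
        calc |M| = |M| / c ^ 2 * |z.im|⁻¹ * (c ^ 2 * |z.im|) := by field_simp
          _ ≤ _ := mul_le_mul_of_nonneg_left h3 (by positivity)) k α β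
    refine ⟨C * C0, fun h hh z hz v w hv hw p => ?_⟩
    have hh0 : 0 < h := hh.1
    have hj := jap_pos p.2
    have fin : p ∈ closure {q | φ₀ (ufun R₀ n₀ δ₁ q) ≠ 0} → ∀ x : ℝ,
        x ≤ C * (jap p.2 ^ k * Real.sqrt (|z.im|⁻¹) ^ (kminus k).toNat) * |z.im|⁻¹ ^ (α + β) *
            ((jap p.2)⁻¹) ^ β →
        h ^ ((kminus k : ℝ) / 4) * x ≤
          C * C0 * h ^ (-(1 / 2 - ε) * ((α : ℝ) + β)) * jap p.2 ^ (-(N : ℝ) - β) := by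
      intro hp x hx
      have h1 := h_bound hh0 hh.2 he he' hz.2 k (α + β)
      have h2 := hC0' _ (jap_one_le p.2) (hM p hp) β
      rw [Nat.cast_add] at h1
      calc _ ≤ h ^ ((kminus k : ℝ) / 4) * _ := mul_le_mul_of_nonneg_left hx (by positivity)
        _ = C * (h ^ ((kminus k : ℝ) / 4) *
            (Real.sqrt (|z.im|⁻¹) ^ (kminus k).toNat * |z.im|⁻¹ ^ (α + β))) *
            (jap p.2 ^ k * ((jap p.2)⁻¹) ^ β) := by ring
        _ ≤ C * h ^ (-(1 / 2 - ε) * ((α : ℝ) + β)) * (C0 * jap p.2 ^ (-(N : ℝ) - β)) :=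
            mul_le_mul (mul_le_mul_of_nonneg_left h1 hC) h2 (by positivity) (by positivity)
        _ = _ := by ring
    rcases hb z hz.1 v w hv hw p with ⟨hp, k1, k2⟩ | ⟨k1, k2⟩
    · exact ⟨fin hp _ k1, fin hp _ k2⟩
    · have hpos : 0 ≤ C * C0 * h ^ (-(1 / 2 - ε) * ((α : ℝ) + β)) * jap p.2 ^ (-(N : ℝ) - β) := by
        positivity
      refine ⟨le_of_eq_of_le ?_ hpos, le_of_eq_of_le ?_ hpos⟩
      · exact mul_eq_zero_of_right _ (norm_eq_zero.2 k1)
      · exact mul_eq_zero_of_right _ (norm_eq_zero.2 k2)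
  · obtain ⟨C, hC, hb⟩ := full_bound hR₀smooth hR₀bdd hR₀ell hn₀smooth hn₀bdd hnpos hδ₁ hδ₁'
      hφ₀ hφb ⟨0, hφ2⟩ Ztwothree hZ23 (fun _ => 1) (fun _ _ => le_rfl)
      K1 hK1 (fun z hz p hp => hlow1 z (hZ23 z hz) p (hρlow z p (Or.inl hz))) k α β
    refine ⟨C * C0, fun z hz v w hv hw p => ?_⟩
    have hj := jap_pos p.2
    have key := hb z hz v w hv hw p
    simp only [Real.sqrt_one, one_pow, mul_one, mul_assoc] at key
    rcases key with ⟨hp, k1, k2⟩ | ⟨k1, k2⟩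
    · have h2 := mul_le_mul_of_nonneg_left (hC0' _ (jap_one_le p.2) (hM p hp) β) hC
      rw [← mul_assoc C C0] at h2
      exact ⟨k1.trans h2, k2.trans h2⟩
    · have hpos : 0 ≤ C * C0 * jap p.2 ^ (-(N : ℝ) - β) := by positivity
      exact ⟨(norm_eq_zero.2 k1).trans_le hpos, (norm_eq_zero.2 k2).trans_le hpos⟩

end
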